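/- arXiv:0805.2830 — 5 statements merged into one kernel-verified Lean document; each statement's English description precedes it below -/
import Mathlib

section
/- Suppose gcd(det(A), p) = 1 and X_0 = 0. Then for every α ∈ ℝ^k and n ≥ 1: |P̂_n(α)|² = ∏_{j=0}^{n−1} ( Σ_{h,i ∈ ℤ^k} μ(h)μ(i) cos((2π/p)⟨h−i, ᵗA^j α⟩) ), and for every pair of vectors u, v in the support of μ this quantity is at most ∏_{j=0}^{n−1} ( 1 − 2μ(u)μ(v) + 2μ(u)μ(v) cos((2π/p)⟨u−v, ᵗA^j α⟩) ). -/
open scoped BigOperators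
open Matrix

noncomputable section

/-- Distribution of the chain `X₀ = 0`, `X_{n+1} = A·X_n + B_n` (before reduction mod `p`)
on `ℤ^k`, where the `B_n` are i.i.d. with common distribution `μ`. -/
def chainDist {k : ℕ} (A : Matrix (Fin k) (Fin k) ℤ) (μ : (Fin k → ℤ) → ℝ) :
    ℕ → (Fin k → ℤ) → ℝ
  | 0 => fun x => if x = 0 then 1 else 0
  | n + 1 => fun x => ∑' y : Fin k → ℤ, chainDist A μ n y * μ (x - A.mulVec y)

/-- The Fourier transform of a function `f : ℤ^k → ℝ` at `α ∈ ℝ^k`: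
`f̂(α) = Σ_{h ∈ ℤ^k} exp((2πi/p)⟨h,α⟩) f(h)`. -/
def fourierZ {k : ℕ} (p : ℕ) (f : (Fin k → ℤ) → ℝ) (α : Fin k → ℝ) : ℂ :=
  ∑' h : Fin k → ℤ,
    Complex.exp (2 * Real.pi * Complex.I * (∑ i, (h i : ℂ) * (α i : ℂ)) / p) * (f h : ℂ)

/-- The real phase. -/
def phs {k : ℕ} (p : ℕ) (h : Fin k → ℤ) (α : Fin k → ℝ) : ℝ :=
  (2 * Real.pi / p) * ∑ l, (h l : ℝ) * α l

/-- The character. -/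
def chr {k : ℕ} (p : ℕ) (h : Fin k → ℤ) (α : Fin k → ℝ) : ℂ :=
  Complex.exp ((phs p h α : ℝ) * Complex.I)

lemma chr_norm {k : ℕ} (p : ℕ) (h : Fin k → ℤ) (α : Fin k → ℝ) : ‖chr p h α‖ = 1 :=
  Complex.norm_exp_ofReal_mul_I _

lemma phs_add {k : ℕ} (p : ℕ) (h i : Fin k → ℤ) (α : Fin k → ℝ) :
    phs p (h + i) α = phs p h α + phs p i α := by
  simp [phs, add_mul, Finset.sum_add_distrib, mul_add]

lemma phs_sub {k : ℕ} (p : ℕ) (h i : Fin k → ℤ) (α : Fin k → ℝ) :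
    phs p (h - i) α = phs p h α - phs p i α := by
  simp [phs, sub_mul, Finset.sum_sub_distrib, mul_sub]

lemma phs_mulVec {k : ℕ} (p : ℕ) (A : Matrix (Fin k) (Fin k) ℤ) (h : Fin k → ℤ)
    (α : Fin k → ℝ) :
    phs p (A.mulVec h) α = phs p h ((Aᵀ.map (Int.cast : ℤ → ℝ)).mulVec α) := by
  unfold phs
  congr 1
  simp only [Matrix.mulVec, dotProduct, Matrix.map_apply, Matrix.transpose_apply, Int.cast_sum,
    Int.cast_mul, Finset.sum_mul, Finset.mul_sum]
  rw [Finset.sum_comm]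
  refine Finset.sum_congr rfl fun i _ => Finset.sum_congr rfl fun j _ => ?_
  ring

lemma fourierZ_eq {k : ℕ} (p : ℕ) (f : (Fin k → ℤ) → ℝ) (α : Fin k → ℝ) :
    fourierZ p f α = ∑' h, chr p h α * (f h : ℂ) := by
  unfold fourierZ chr phs
  refine tsum_congr fun h => ?_
  congr 2
  push_cast
  ring

lemma summable_chr {k : ℕ} (p : ℕ) (f : (Fin k → ℤ) → ℝ) (hf : Summable f) (α : Fin k → ℝ) :
    Summable fun h => ‖chr p h α * (f h : ℂ)‖ := by
  simpa [chr_norm] using hf.abs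

/-- The shear. -/
def shear {k : ℕ} (A : Matrix (Fin k) (Fin k) ℤ) :
    ((Fin k → ℤ) × (Fin k → ℤ)) ≃ ((Fin k → ℤ) × (Fin k → ℤ)) where
  toFun q := (q.2, q.1 - A.mulVec q.2)
  invFun q := (q.2 + A.mulVec q.1, q.1)
  left_inv q := by simp
  right_inv q := by simp

lemma summable_shear {k : ℕ} (A : Matrix (Fin k) (Fin k) ℤ) (c μ : (Fin k → ℤ) → ℝ)
    (hc : Summable c) (hμ : Summable μ) :
    Summable fun q : (Fin k → ℤ) × (Fin k → ℤ) => c q.2 * μ (q.1 - A.mulVec q.2) := by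
  have h := summable_mul_of_summable_norm hc.norm hμ.norm
  exact (shear A).summable_iff.mpr h

lemma chain_summable {k : ℕ} (A : Matrix (Fin k) (Fin k) ℤ) (μ : (Fin k → ℤ) → ℝ)
    (hμ : Summable μ) (n : ℕ) : Summable (chainDist A μ n) := by
  induction n with
  | zero =>
    have : Summable fun x : Fin k → ℤ => if x = 0 then (1 : ℝ) else 0 :=
      (hasSum_ite_eq 0 1).summable
    simpa [chainDist] using this
  | succ n ih =>
    exact (summable_shear A _ μ ih hμ).prod

lemma fourier_succ {k : ℕ} (p : ℕ) (A : Matrix (Fin k) (Fin k) ℤ) (c μ : (Fin k → ℤ) → ℝ)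
    (hc : Summable c) (hμ : Summable μ) (α : Fin k → ℝ) :
    fourierZ p (fun x => ∑' y : Fin k → ℤ, c y * μ (x - A.mulVec y)) α =
      fourierZ p c ((Aᵀ.map (Int.cast : ℤ → ℝ)).mulVec α) * fourierZ p μ α := by
  simp only [fourierZ_eq]
  have h1 := summable_chr p c hc ((Aᵀ.map (Int.cast : ℤ → ℝ)).mulVec α)
  have h2 := summable_chr p μ hμ α
  rw [tsum_mul_tsum_of_summable_norm h1 h2, ← (shear A).tsum_eq]
  have h3 := (shear A).summable_iff.mpr (summable_mul_of_summable_norm h1 h2)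
  refine Eq.trans ?_ h3.tsum_prod.symm
  refine tsum_congr fun x => ?_
  rw [Complex.ofReal_tsum, ← tsum_mul_left]
  refine tsum_congr fun y => ?_
  have : chr p x α = chr p y ((Aᵀ.map (Int.cast : ℤ → ℝ)).mulVec α)
      * chr p (x - A.mulVec y) α := by
    unfold chr
    rw [← Complex.exp_add, ← phs_mulVec, phs_sub]
    congr 1
    push_cast
    ring
  simp only [shear, Function.comp, Equiv.coe_fn_mk]
  rw [this]
  push_cast
  ring

lemma fourier_norm_sq {k : ℕ} (p : ℕ) (μ : (Fin k → ℤ) → ℝ) (hμ : Summable μ)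
    (α : Fin k → ℝ) :
    HasSum (fun q : (Fin k → ℤ) × (Fin k → ℤ) => μ q.1 * μ q.2 *
      Real.cos (phs p (q.1 - q.2) α)) (‖fourierZ p μ α‖ ^ 2) := by
  have h1 := summable_chr p μ hμ α
  have h2 : Summable fun h => ‖(starRingEnd ℂ) (chr p h α * (μ h : ℂ))‖ := by
    simpa only [Complex.norm_conj] using h1
  have h3 := (summable_mul_of_summable_norm h1 h2).hasSum
  rw [← tsum_mul_tsum_of_summable_norm h1 h2, ← Complex.conj_tsum, ← fourierZ_eq,
    Complex.mul_conj, Complex.normSq_eq_norm_sq] at h3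
  have h4 := Complex.hasSum_re h3
  rw [Complex.ofReal_re] at h4
  convert h4 using 2 with q
  have : chr p q.1 α * (μ q.1 : ℂ) * (starRingEnd ℂ) (chr p q.2 α * (μ q.2 : ℂ)) =
      ((μ q.1 * μ q.2 : ℝ) : ℂ) * Complex.exp ((phs p (q.1 - q.2) α : ℝ) * Complex.I) := by
    rw [map_mul, Complex.conj_ofReal]
    unfold chr
    rw [← Complex.exp_conj, map_mul, Complex.conj_ofReal, Complex.conj_I, phs_sub]
    have : ((phs p q.1 α - phs p q.2 α : ℝ) : ℂ) * Complex.I =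
      (phs p q.1 α : ℂ) * Complex.I + (phs p q.2 α : ℂ) * -Complex.I := by push_cast; ring
    rw [this, Complex.exp_add]
    push_cast
    ring
  rw [this, Complex.re_ofReal_mul, Complex.exp_ofReal_mul_I_re]

lemma fourier_bound {k : ℕ} (p : ℕ) (μ : (Fin k → ℤ) → ℝ) (hμ0 : ∀ x, 0 ≤ μ x)
    (hμ1 : HasSum μ 1) (α : Fin k → ℝ) (u v : Fin k → ℤ) :
    ‖fourierZ p μ α‖ ^ 2 ≤
      1 - 2 * μ u * μ v + 2 * μ u * μ v * Real.cos (phs p (u - v) α) := by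
  have hs := fourier_norm_sq p μ hμ1.summable α
  have hw : HasSum (fun q : (Fin k → ℤ) × (Fin k → ℤ) => μ q.1 * μ q.2) 1 := by
    have h := (summable_mul_of_summable_norm hμ1.summable.norm hμ1.summable.norm).hasSum
    rwa [← tsum_mul_tsum_of_summable_norm hμ1.summable.norm hμ1.summable.norm, hμ1.tsum_eq,
      mul_one] at h
  have hle : ∀ q : (Fin k → ℤ) × (Fin k → ℤ),
      μ q.1 * μ q.2 * Real.cos (phs p (q.1 - q.2) α) ≤ μ q.1 * μ q.2 := by
    intro q
    have h1 := mul_nonneg (hμ0 q.1) (hμ0 q.2)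
    have h2 := mul_le_mul_of_nonneg_left (Real.cos_le_one (phs p (q.1 - q.2) α)) h1
    rwa [mul_one] at h2
  by_cases huv : u = v
  · subst huv
    have : phs p (u - u) α = 0 := by rw [phs_sub, sub_self]
    rw [this, Real.cos_zero]
    have := hasSum_le hle hs hw
    linarith
  · set d := μ u * μ v * (1 - Real.cos (phs p (u - v) α)) with hd
    have hG := (hw.sub (hasSum_ite_eq (u, v) d)).sub (hasSum_ite_eq (v, u) d)
    have := hasSum_le (fun q => ?_) hs hG
    · rw [hd] at this; linarith
    · have hne : (u, v) ≠ (v, u) := fun h => huv (congrArg Prod.fst h)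
      by_cases h1 : q = (u, v)
      · subst h1
        rw [if_pos rfl, if_neg hne, hd]
        apply le_of_eq; ring
      · by_cases h2 : q = (v, u)
        · subst h2
          rw [if_neg hne.symm, if_pos rfl, hd]
          have : phs p (v - u) α = - phs p (u - v) α := by rw [phs_sub, phs_sub]; ring
          simp only [this, Real.cos_neg]
          apply le_of_eq; ring
        · rw [if_neg h1, if_neg h2, sub_zero, sub_zero]
          exact hle q

lemma fourier_chain {k : ℕ} (p : ℕ) (A : Matrix (Fin k) (Fin k) ℤ) (μ : (Fin k → ℤ) → ℝ)
    (hμ : Summable μ) (n : ℕ) (α : Fin k → ℝ) :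
    fourierZ p (chainDist A μ n) α = ∏ j ∈ Finset.range n,
      fourierZ p μ (((Aᵀ ^ j).map (Int.cast : ℤ → ℝ)).mulVec α) := by
  induction n generalizing α with
  | zero =>
    rw [fourierZ_eq, tsum_eq_single 0]
    · simp [chainDist, chr, phs]
    · intro x hx
      simp [chainDist, hx]
  | succ n ih =>
    have h := fourier_succ p A (chainDist A μ n) μ (chain_summable A μ hμ n) hμ α
    rw [Finset.prod_range_succ']
    refine Eq.trans h ?_
    rw [ih]
    congr 1
    · refine Finset.prod_congr rfl fun j _ => ?_
      rw [Matrix.mulVec_mulVec, pow_succ]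
      congr 2
      exact (Matrix.map_mul (f := Int.castRingHom ℝ)).symm
    · rw [pow_zero, Matrix.map_one _ Int.cast_zero Int.cast_one, Matrix.one_mulVec]

/-- **Lemma 2.2, part 2**: if `gcd(det A, p) = 1` and `X₀ = 0`, then for every `α ∈ ℝ^k`
and `n ≥ 1`,
`|P̂_n(α)|² = ∏_{j=0}^{n−1} ( Σ_{h,i ∈ ℤ^k} μ(h)μ(i) cos((2π/p)⟨h−i, ᵗA^j α⟩) )`,
and for every `u`, `v` in the support of `μ` this quantity is at most
`∏_{j=0}^{n−1} ( 1 − 2μ(u)μ(v) + 2μ(u)μ(v) cos((2π/p)⟨u−v, ᵗA^j α⟩) )`. -/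
theorem fourier_sq_formula_and_bound (k : ℕ) (hk : 1 ≤ k)
    (A : Matrix (Fin k) (Fin k) ℤ) (hA : A.det ≠ 0)
    (p : ℕ) (hp : 0 < p) (hgcd : Int.gcd A.det p = 1)
    (μ : (Fin k → ℤ) → ℝ) (hμ0 : ∀ x, 0 ≤ μ x) (hμ1 : HasSum μ 1)
    (α : Fin k → ℝ) (n : ℕ) (hn : 1 ≤ n) :
    (‖fourierZ p (chainDist A μ n) α‖) ^ 2 =
      (∏ j ∈ Finset.range n,
        ∑' hi : (Fin k → ℤ) × (Fin k → ℤ),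
          μ hi.1 * μ hi.2 *
            Real.cos ((2 * Real.pi / p) *
              ∑ l, ((hi.1 l - hi.2 l : ℤ) : ℝ) *
                ((Aᵀ ^ j).map (Int.cast : ℤ → ℝ)).mulVec α l)) ∧
    ∀ u v : Fin k → ℤ, μ u ≠ 0 → μ v ≠ 0 →
      (‖fourierZ p (chainDist A μ n) α‖) ^ 2 ≤
        ∏ j ∈ Finset.range n,
          (1 - 2 * μ u * μ v + 2 * μ u * μ v *
            Real.cos ((2 * Real.pi / p) *
              ∑ l, ((u l - v l : ℤ) : ℝ) *
                ((Aᵀ ^ j).map (Int.cast : ℤ → ℝ)).mulVec α l)) := by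
  have hμs := hμ1.summable
  have key : ‖fourierZ p (chainDist A μ n) α‖ ^ 2 = ∏ j ∈ Finset.range n,
      ‖fourierZ p μ (((Aᵀ ^ j).map (Int.cast : ℤ → ℝ)).mulVec α)‖ ^ 2 := by
    rw [fourier_chain p A μ hμs, norm_prod, Finset.prod_pow]
  rw [key]
  refine ⟨?_, fun u v _ _ => ?_⟩
  · refine Finset.prod_congr rfl fun j _ => ?_
    exact (fourier_norm_sq p μ hμs _).tsum_eq.symm
  · refine Finset.prod_le_prod (fun j _ => sq_nonneg _) fun j _ => ?_
    exact fourier_bound p μ hμ0 hμ1 _ u v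
end
end

section
/- Let M be a k×k complex matrix and λ_1, …, λ_d complex numbers such that ∏_{i=1}^{d} (M − λ_i I) = 0. Then for every j ∈ ℕ and every e with 0 ≤ e ≤ d: M^j · ∏_{i=1}^{e} (M − λ_i I) = Σ_{h=e+1}^{d} ( Σ_{k_1, …, k_{d−h+1} ≥ 0, k_1+⋯+k_{d−h+1} = j−d+h} ∏_{m=h}^{d} λ_m^{k_{d−m+1}} ) · ∏_{n=h+1}^{d} (M − λ_n I) · ∏_{i=1}^{e} (M − λ_i I), where the inner sum over (k_1, …, k_{d−h+1}) is empty (hence 0) when j − d + h < 0. -/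
open scoped BigOperators
open Matrix

noncomputable section

/-- The complete homogeneous symmetric polynomial of degree `deg` in the `m` variables
`x 0, …, x (m-1)`:  `h_deg = Σ_{k_1+⋯+k_m = deg} ∏ x_i^{k_i}`. -/
def completeHom (m : ℕ) (x : ℕ → ℂ) (deg : ℕ) : ℂ :=
  ∑ c ∈ Finset.Nat.antidiagonalTuple m deg, ∏ i : Fin m, x i ^ c i

theorem completeHom_zero_deg (m : ℕ) (x : ℕ → ℂ) : completeHom m x 0 = 1 := by
  simp [completeHom, Finset.Nat.antidiagonalTuple_zero_right]

theorem completeHom_zero_succ (x : ℕ → ℂ) (n : ℕ) : completeHom 0 x (n + 1) = 0 := by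
  simp [completeHom]

theorem completeHom_succ_eq (m : ℕ) (x : ℕ → ℂ) (n : ℕ) :
    completeHom (m + 1) x n =
      ∑ p ∈ Finset.HasAntidiagonal.antidiagonal n, x 0 ^ p.1 * completeHom m (fun i => x (i + 1)) p.2 := by
  unfold completeHom
  simp_rw [Finset.mul_sum]
  rw [Finset.sum_sigma']
  refine Finset.sum_bij' (fun c _ => ⟨(c 0, ∑ i : Fin m, c i.succ), fun i => c i.succ⟩)
    (fun q _ => Fin.cons q.1.1 q.2) ?_ ?_ ?_ ?_ ?_
  · intro c hc
    rw [Finset.Nat.mem_antidiagonalTuple, Fin.sum_univ_succ] at hc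
    simp [Finset.Nat.mem_antidiagonalTuple, hc]
  · rintro ⟨⟨a, b⟩, c⟩ hc
    simp only [Finset.mem_sigma, Finset.HasAntidiagonal.mem_antidiagonal,
      Finset.Nat.mem_antidiagonalTuple] at hc
    rw [Finset.Nat.mem_antidiagonalTuple, Fin.sum_univ_succ]
    simp [hc.1, hc.2]
  · intro c hc
    funext i
    refine Fin.cases ?_ (fun i => ?_) i <;> simp
  · rintro ⟨⟨a, b⟩, c⟩ hc
    simp only [Finset.mem_sigma, Finset.HasAntidiagonal.mem_antidiagonal,
      Finset.Nat.mem_antidiagonalTuple] at hc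
    obtain ⟨_, rfl⟩ := hc
    simp
  · intro c hc
    rw [Fin.prod_univ_succ]
    simp

theorem completeHom_rec (m : ℕ) (x : ℕ → ℂ) (n : ℕ) :
    completeHom (m + 1) x (n + 1) =
      x 0 * completeHom (m + 1) x n + completeHom m (fun i => x (i + 1)) (n + 1) := by
  rw [completeHom_succ_eq, Finset.Nat.sum_antidiagonal_succ, completeHom_succ_eq m x n,
    Finset.mul_sum, add_comm]
  simp only [pow_zero, one_mul, pow_succ]
  congr 1
  refine Finset.sum_congr rfl fun p _ => ?_
  ring

/-- The coefficient in the expansion. -/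
def coefC (d : ℕ) (l : ℕ → ℂ) (j h : ℕ) : ℂ :=
  if d ≤ j + h + 1 then completeHom (d - h) (fun i => l (h + i)) (j + h + 1 - d) else 0

theorem coefC_top (d : ℕ) (l : ℕ → ℂ) (j : ℕ) : coefC d l j d = 0 := by
  unfold coefC
  rw [if_pos (by omega), Nat.sub_self, show j + d + 1 - d = j + 1 by omega,
    completeHom_zero_succ]

theorem coefC_rec (d : ℕ) (l : ℕ → ℂ) (j h : ℕ) (hd : h < d) :
    coefC d l (j + 1) h = l h * coefC d l j h + coefC d l j (h + 1) := by
  unfold coefC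
  obtain ⟨m, rfl⟩ : ∃ m, d = h + m + 1 := ⟨d - h - 1, by omega⟩
  rw [show h + m + 1 - h = m + 1 by omega, show h + m + 1 - (h + 1) = m by omega]
  rcases lt_trichotomy m (j + 1) with h1 | h1 | h1
  · obtain ⟨n, rfl⟩ : ∃ n, j = m + n := ⟨j - m, by omega⟩
    rw [if_pos (by omega), if_pos (by omega), if_pos (by omega),
      show m + n + 1 + h + 1 - (h + m + 1) = n + 1 by omega,
      show m + n + h + 1 - (h + m + 1) = n by omega,
      show m + n + (h + 1) + 1 - (h + m + 1) = n + 1 by omega, completeHom_rec]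
    simp only [add_zero, add_assoc, add_comm 1]
  · subst h1
    rw [if_pos (by omega), if_neg (by omega), if_pos (by omega),
      show j + 1 + h + 1 - (h + (j + 1) + 1) = 0 by omega,
      show j + (h + 1) + 1 - (h + (j + 1) + 1) = 0 by omega]
    simp [completeHom_zero_deg]
  · rw [if_neg (by omega), if_neg (by omega), if_neg (by omega)]
    simp

/-- **Lemma 2.5, part 2**: if `∏_{i=1}^{d} (M − λ_i I) = 0` (here `λ_i = l (i-1)`), then for
every `j ∈ ℕ` and every `e ≤ d`,
`M^j ∏_{i=1}^{e} (M − λ_i I)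
  = Σ_{h=e+1}^{d} h_{j−d+h}(λ_h,…,λ_d) ∏_{n=h+1}^{d} (M − λ_n I) ∏_{i=1}^{e} (M − λ_i I)`,
where `h_{j−d+h}` is the complete homogeneous symmetric polynomial of degree `j−d+h`
(interpreted as `0` when `j−d+h < 0`). -/
theorem matrix_power_prod_expansion (k d : ℕ) (M : Matrix (Fin k) (Fin k) ℂ) (l : ℕ → ℂ)
    (hmin : ((List.range d).map (fun i => M - l i • (1 : Matrix (Fin k) (Fin k) ℂ))).prod = 0) :
    ∀ j e : ℕ, e ≤ d →
      M ^ j * ((List.range e).map (fun i => M - l i • (1 : Matrix (Fin k) (Fin k) ℂ))).prod =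
        ∑ h ∈ Finset.Ico e d,
          (if d ≤ j + h + 1 then completeHom (d - h) (fun i => l (h + i)) (j + h + 1 - d)
            else 0) •
          (((List.range' (h + 1) (d - (h + 1))).map
              (fun i => M - l i • (1 : Matrix (Fin k) (Fin k) ℂ))).prod *
            ((List.range e).map (fun i => M - l i • (1 : Matrix (Fin k) (Fin k) ℂ))).prod) := by
  intro j e hed
  set F : ℕ → Matrix (Fin k) (Fin k) ℂ := fun i => M - l i • (1 : Matrix (Fin k) (Fin k) ℂ) with hF
  set P := ((List.range e).map F).prod with hP
  set Q : ℕ → Matrix (Fin k) (Fin k) ℂ := fun h => ((List.range' h (d - h)).map F).prod with hQ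
  change M ^ j * P = ∑ h ∈ Finset.Ico e d, coefC d l j h • (Q (h + 1) * P)
  have hcomm : ∀ a b, Commute (F a) (F b) := by
    intro a b
    have h1 : ∀ c : ℂ, Commute (c • (1 : Matrix (Fin k) (Fin k) ℂ)) M :=
      fun c => (Commute.one_left M).smul_left c
    exact ((Commute.refl M).sub_right (h1 _).symm).sub_left
      ((h1 _).sub_right (((Commute.one_left _).smul_left _).smul_right _))
  have hQP : Q e * P = 0 := by
    have hc : Commute P (Q e) := by
      apply Commute.list_prod_left
      intro x hx
      apply Commute.list_prod_right
      intro y hy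
      obtain ⟨a, _, rfl⟩ := List.mem_map.1 hx
      obtain ⟨b, _, rfl⟩ := List.mem_map.1 hy
      exact hcomm a b
    rw [← hc.eq, ← hmin, hP, hQ]
    simp only
    rw [← List.prod_append, ← List.map_append, List.range_eq_range', List.range_eq_range']
    congr 2
    have := @List.range'_append_1 0 e (d - e)
    rw [zero_add] at this
    rw [this]
    congr 1
    omega
  have hQs : ∀ h, h < d → M * Q (h + 1) = Q h + l h • Q (h + 1) := by
    intro h hd
    have : Q h = F h * Q (h + 1) := by
      simp only [hQ]
      rw [show d - h = (d - (h + 1)) + 1 by omega, List.range'_succ, List.map_cons,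
        List.prod_cons]
    rw [this, hF]
    simp [sub_mul]
  have hQd : Q d = 1 := by simp [hQ]
  clear_value P Q
  induction j with
  | zero =>
    rcases hed.lt_or_eq with h | rfl
    · obtain ⟨m, rfl⟩ : ∃ m, d = m + 1 := ⟨d - 1, by omega⟩
      rw [Finset.sum_eq_single m]
      · simp [coefC, hQd, completeHom_zero_deg]
      · intro b hb hne
        rw [Finset.mem_Ico] at hb
        rw [coefC, if_neg (by omega), zero_smul]
      · intro hm
        exact absurd (Finset.mem_Ico.2 ⟨by omega, by omega⟩) hm
    · rw [hQd, one_mul] at hQP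
      simp [hQP]
  | succ j ih =>
    rw [pow_succ', mul_assoc, ih, Finset.mul_sum]
    have tele : ∑ h ∈ Finset.Ico e d,
        (coefC d l j (h + 1) • (Q (h + 1) * P) - coefC d l j h • (Q h * P)) = 0 := by
      rw [Finset.sum_Ico_sub (fun h => coefC d l j h • (Q h * P)) hed]
      simp [coefC_top, hQP]
    rw [← sub_eq_zero, ← neg_eq_zero, ← tele, neg_sub, ← Finset.sum_sub_distrib]
    refine Finset.sum_congr rfl fun h hh => ?_
    rw [coefC_rec d l j h (Finset.mem_Ico.1 hh).2, mul_smul_comm, ← mul_assoc,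
      hQs h (Finset.mem_Ico.1 hh).2, add_mul, smul_mul_assoc]
    module
end
end

section
/- Assume A has complex eigenvalues λ_1, …, λ_k, all nonzero, with |λ_i| ≠ 1 for every i = 1, …, k, and assume the support of μ is not parallel to a proper subspace of ℚ^k invariant under A. Then there exist a constant c > 0 and a function ε : ℕ → ℝ with ε(p) → 0 as p → ∞, such that for every positive integer p with gcd(det(A), p) = 1 and gcd(det(B), p) = 1, and every n ≥ c·(ln p)², one has ‖P_n − U‖ ≤ ε(p). -/
open scoped BigOperators
open Matrix

noncomputable section

/-- `P_n`, the distribution of `X_n = A·X_{n-1} + B_{n-1} (mod p)` on `(ℤ/pℤ)^k`. -/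
def chainDistMod {k : ℕ} (A : Matrix (Fin k) (Fin k) ℤ) (μ : (Fin k → ℤ) → ℝ) (p : ℕ)
    (n : ℕ) (x : Fin k → ZMod p) : ℝ :=
  ∑' y : {y : Fin k → ℤ // (fun i => ((y i : ZMod p))) = x}, chainDist A μ n y.val

/-- The uniform distribution `U` on `(ℤ/pℤ)^k`. -/
def unif (k p : ℕ) : ℝ := ((p : ℝ) ^ k)⁻¹

/-- The variation distance `‖P_n − U‖`. -/
def tvDist {k : ℕ} (A : Matrix (Fin k) (Fin k) ℤ) (μ : (Fin k → ℤ) → ℝ) (p : ℕ)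
    (n : ℕ) : ℝ :=
  (1 / 2) * ∑' x : Fin k → ZMod p, |chainDistMod A μ p n x - unif k p|

/-- `supp μ` is parallel to `v + W` for some proper subspace `W` of `ℚ^k` invariant under
`A`. -/
def ParallelInv {k : ℕ} (A : Matrix (Fin k) (Fin k) ℤ) (μ : (Fin k → ℤ) → ℝ) : Prop :=
  ∃ (W : Submodule ℚ (Fin k → ℚ)) (v : Fin k → ℚ), W ≠ ⊤ ∧
    (∀ w ∈ W, (A.map (Int.cast : ℤ → ℚ)).mulVec w ∈ W) ∧
    ∀ x : Fin k → ℤ, μ x ≠ 0 → (fun i => (x i : ℚ)) - v ∈ W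

/-- `V = {h − k : h, k ∈ supp μ}`. -/
def Vset {k : ℕ} (μ : (Fin k → ℤ) → ℝ) : Set (Fin k → ℤ) :=
  {x | ∃ h g : Fin k → ℤ, μ h ≠ 0 ∧ μ g ≠ 0 ∧ x = h - g}

/-- `d`, the degree of the minimal polynomial of `A` (over `ℚ`). -/
def minpolyDeg {k : ℕ} (A : Matrix (Fin k) (Fin k) ℤ) : ℕ :=
  (minpoly ℚ (A.map (Int.cast : ℤ → ℚ))).natDegree

/-- `V^{d−1} = {A^m x : x ∈ V, m = 0, …, d−1}`. -/
def VdSet {k : ℕ} (A : Matrix (Fin k) (Fin k) ℤ) (μ : (Fin k → ℤ) → ℝ) :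
    Set (Fin k → ℤ) :=
  {y | ∃ x ∈ Vset μ, ∃ m : ℕ, m < minpolyDeg A ∧ y = (A ^ m).mulVec x}

/-- The matrix `B = (y_1 … y_k)` with columns `y_1, …, y_k`. -/
def colMat {k : ℕ} (y : Fin k → (Fin k → ℤ)) : Matrix (Fin k) (Fin k) ℤ :=
  Matrix.of fun i j => y j i

def shiftL : (ℕ → ℂ) →ₗ[ℂ] (ℕ → ℂ) := LinearMap.funLeft ℂ ℂ Nat.succ

lemma shiftL_pow (t : ℕ) (u : ℕ → ℂ) (i : ℕ) : (shiftL ^ t) u i = u (i + t) := by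
  induction t generalizing u i with
  | zero => simp
  | succ t ih =>
    rw [pow_succ, Module.End.mul_apply, ih]
    simp [shiftL, LinearMap.funLeft_apply, Nat.add_assoc]

lemma small_root {r K M : ℝ} (hr0 : 0 ≤ r) (hr : r < 1) (hK : 0 ≤ K) (u : ℕ → ℂ) (lam : ℂ)
    (hl : ‖lam‖ = r) (a m : ℕ) (hv : ∀ i, a ≤ i → i < a + m → ‖u (i+1) - lam * u i‖ ≤ K)
    (hM : ‖u a‖ ≤ M) : ‖u (a + m)‖ ≤ K / (1 - r) + r ^ m * M := by
  have h1 : 0 < 1 - r := by linarith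
  induction m with
  | zero => simp; have : 0 ≤ K / (1-r) := by positivity
            linarith
  | succ m ih =>
    have ih' := ih (fun i h1 h2 => hv i h1 (by omega))
    have h2 := hv (a + m) (by omega) (by omega)
    have h3 : ‖u (a + m + 1)‖ ≤ ‖u (a+m+1) - lam * u (a+m)‖ + r * ‖u (a+m)‖ := by
      rw [← hl, ← norm_mul]
      exact norm_le_norm_sub_add _ _
    have h4 := mul_le_mul_of_nonneg_left ih' hr0
    have h5 : K / (1 - r) = K + r * (K / (1-r)) := by field_simp; ring
    calc ‖u (a + (m + 1))‖ ≤ K + r * (K / (1 - r) + r ^ m * M) := by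
          rw [← add_assoc]; linarith
      _ = K + r * (K / (1-r)) + r ^ (m+1) * M := by ring
      _ = _ := by rw [← h5]

lemma big_root {r K M : ℝ} (hr : 1 < r) (hK : 0 ≤ K) (u : ℕ → ℂ) (lam : ℂ)
    (hl : ‖lam‖ = r) (m : ℕ) : ∀ (a : ℕ) (_ : ∀ i, a ≤ i → i < a + m → ‖u (i+1) - lam * u i‖ ≤ K)
    (_ : ‖u (a + m)‖ ≤ M), ‖u a‖ ≤ K / (r - 1) + (r⁻¹) ^ m * M := by
  have h1 : 0 < r - 1 := by linarith
  have h0 : 0 < r := by linarith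
  induction m with
  | zero => intro a _ h; simp at *; have : 0 ≤ K / (r - 1) := by positivity
            linarith
  | succ m ih =>
    intro a hv hM
    have ih' := ih (a+1) (fun i h1 h2 => hv i (by omega) (by omega)) (by convert hM using 3; ring)
    have h2 := hv a (by omega) (by omega)
    have h3 : r * ‖u a‖ ≤ ‖u (a+1) - lam * u a‖ + ‖u (a+1)‖ := by
      rw [← hl, ← norm_mul, norm_sub_rev]
      exact norm_le_norm_sub_add _ _
    have h5 : K / (r - 1) = r⁻¹ * (K + K / (r-1)) := by field_simp; ring
    have h6 : ‖u a‖ ≤ r⁻¹ * (K + (K / (r-1) + (r⁻¹)^m * M)) := by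
      rw [le_inv_mul_iff₀ h0]; linarith
    calc ‖u a‖ ≤ _ := h6
      _ = r⁻¹ * (K + K / (r-1)) + (r⁻¹)^(m+1) * M := by ring
      _ = _ := by rw [← h5]

open Polynomial in
lemma decay (s : Multiset ℂ) (hs : ∀ l ∈ s, ‖l‖ ≠ 1) : ∀ η : ℝ, 0 < η → ∃ L : ℕ,
    ∀ (u : ℕ → ℂ) (M : ℝ) (j : ℕ), L ≤ j →
      (∀ i, j ≤ i + L → i ≤ j + L → ‖u i‖ ≤ M ∧
        aeval shiftL (s.map (fun a => X - C a)).prod u i = 0) → ‖u j‖ ≤ η * M := by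
  induction s using Multiset.induction_on with
  | empty =>
    intro η hη
    refine ⟨0, fun u M j _ h => ?_⟩
    obtain ⟨h1, h2⟩ := h j (by omega) (by omega)
    simp at h2
    rw [h2] at h1 ⊢
    simp at *
    positivity
  | cons lam s ih =>
    intro η hη
    have ih := ih (fun l hl => hs l (Multiset.mem_cons_of_mem hl))
    have hne : ‖lam‖ ≠ 1 := hs lam (Multiset.mem_cons_self _ _)
    have hlp : 0 < 1 + ‖lam‖ := by positivity
    set g : ℝ := |1 - ‖lam‖| with hg
    have hgp : 0 < g := by rw [hg, abs_pos]; intro h; exact hne (by linarith)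
    obtain ⟨L', hL'⟩ := ih (η * g / (2 * (1 + ‖lam‖))) (by positivity)
    set q : ℝ := if ‖lam‖ < 1 then ‖lam‖ else ‖lam‖⁻¹ with hq
    have hq1 : q < 1 := by
      rw [hq]; split_ifs with h
      · exact h
      · exact inv_lt_one_of_one_lt₀ (lt_of_le_of_ne (not_lt.1 h) (Ne.symm hne))
    have hq0 : 0 ≤ q := by rw [hq]; split_ifs <;> positivity
    obtain ⟨m, hm⟩ := exists_pow_lt_of_lt_one (show 0 < η / 2 by positivity) hq1
    refine ⟨L' + m + 1, fun u M j hj h => ?_⟩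
    have hM0 : 0 ≤ M := le_trans (norm_nonneg _) (h j (by omega) (by omega)).1
    set v : ℕ → ℂ := aeval shiftL (X - C lam) u with hv
    have hvi : ∀ i, v i = u (i+1) - lam * u i := by
      intro i
      have := shiftL_pow 1 u i
      simp only [pow_one] at this
      simp [hv, this]
    have hvb : ∀ i, j ≤ i + m → i ≤ j + m → ‖v i‖ ≤ η * g / 2 * M := by
      intro i h1 h2
      have := hL' v ((1 + ‖lam‖) * M) i (by omega) (fun i' h3 h4 => ⟨?_, ?_⟩)
      · calc _ ≤ _ := this
          _ = _ := by field_simp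
      · rw [hvi]
        have a1 := (h i' (by omega) (by omega)).1
        have a2 := (h (i'+1) (by omega) (by omega)).1
        calc _ ≤ ‖u (i'+1)‖ + ‖lam * u i'‖ := norm_sub_le _ _
          _ ≤ M + ‖lam‖ * M := by rw [norm_mul]; gcongr
          _ = _ := by ring
      · have := (h i' (by omega) (by omega)).2
        rw [Multiset.map_cons, Multiset.prod_cons, mul_comm, map_mul, Module.End.mul_apply] at this
        exact this
    have hK : 0 ≤ η * g / 2 * M := by positivity
    have hfin : η * g / 2 * M / g + q ^ m * M ≤ η * M := by
      have : η * g / 2 * M / g = η / 2 * M := by field_simp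
      rw [this]; nlinarith
    by_cases hl : ‖lam‖ < 1
    · have hg' : g = 1 - ‖lam‖ := abs_of_pos (by linarith)
      have := small_root (norm_nonneg lam) hl hK u lam rfl (j - m) m
        (fun i h1 h2 => by rw [← hvi]; exact hvb i (by omega) (by omega))
        (h (j-m) (by omega) (by omega)).1
      rw [Nat.sub_add_cancel (by omega), ← hg'] at this
      rw [hq, if_pos hl] at hfin
      exact this.trans hfin
    · have hl' : 1 < ‖lam‖ := lt_of_le_of_ne (not_lt.1 hl) (Ne.symm hne)
      have hg' : g = ‖lam‖ - 1 := by rw [hg, abs_sub_comm]; exact abs_of_pos (by linarith)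
      have := big_root hl' hK u lam rfl m j
        (fun i h1 h2 => by rw [← hvi]; exact hvb i (by omega) (by omega))
        (h (j+m) (by omega) (by omega)).1
      rw [← hg'] at this
      rw [hq, if_neg hl] at hfin
      exact this.trans hfin

open Polynomial in
lemma decay_iter (f : ℂ[X]) (hf : f.Monic) (hs : ∀ l, f.IsRoot l → ‖l‖ ≠ 1) : ∃ L : ℕ,
    ∀ (m : ℕ) (u : ℕ → ℂ) (M : ℝ) (j : ℕ), m * L ≤ j →
      (∀ i, j ≤ i + m * L → i ≤ j + m * L → ‖u i‖ ≤ M ∧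
        aeval shiftL f u i = 0) → ‖u j‖ ≤ (1/2)^m * M := by
  have hprod : (f.roots.map (fun a => X - C a)).prod = f := by
    have := (IsAlgClosed.splits f).eq_prod_roots
    rw [hf.leadingCoeff, C_1, one_mul] at this
    exact this.symm
  obtain ⟨L, hL⟩ := decay f.roots (fun l hl => hs l (isRoot_of_mem_roots hl)) (1/2) (by norm_num)
  rw [hprod] at hL
  refine ⟨L, fun m => ?_⟩
  induction m with
  | zero => intro u M j _ h; simpa using (h j (by omega) (by omega)).1
  | succ m ih =>
    intro u M j hj h
    have e : (m+1) * L = m * L + L := by ring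
    rw [e] at hj
    simp only [e] at h
    rw [pow_succ', mul_assoc]
    refine hL u _ j (by omega) (fun i h1 h2 => ⟨?_, (h i (by omega) (by omega)).2⟩)
    exact ih u M i (by omega) (fun i' h3 h4 => h i' (by omega) (by omega))

/-- the real number sequence -/
def wseq {k : ℕ} (A : Matrix (Fin k) (Fin k) ℤ) (p : ℕ) (α : Fin k → ZMod p) (y : Fin k → ℤ)
    (j : ℕ) : ZMod p := ∑ i, α i * (((A ^ j).mulVec y i : ℤ) : ZMod p)

lemma wseq_rec {k : ℕ} (A : Matrix (Fin k) (Fin k) ℤ) (p : ℕ) (α : Fin k → ZMod p)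
    (y : Fin k → ℤ) (j : ℕ) :
    ∑ t ∈ Finset.range (A.charpoly.natDegree + 1),
      ((A.charpoly.coeff t : ℤ) : ZMod p) * wseq A p α y (j + t) = 0 := by
  have h := Matrix.aeval_self_charpoly A
  rw [Polynomial.aeval_eq_sum_range] at h
  have h2 : (A ^ j * ∑ t ∈ Finset.range (A.charpoly.natDegree + 1), A.charpoly.coeff t • A ^ t)
      = 0 := by rw [h, mul_zero]
  rw [Finset.mul_sum] at h2
  have h3 : ∀ i, ∑ t ∈ Finset.range (A.charpoly.natDegree + 1),
      A.charpoly.coeff t * (A ^ (j+t)).mulVec y i = 0 := by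
    intro i
    have := congrFun (congrArg (fun X => Matrix.mulVec X y) h2) i
    simp only [Matrix.sum_mulVec, Finset.sum_apply, Matrix.zero_mulVec, Pi.zero_apply,
      mul_smul_comm, Matrix.smul_mulVec, Pi.smul_apply, smul_eq_mul, ← pow_add] at this
    exact this
  unfold wseq
  simp only [Finset.mul_sum]
  rw [Finset.sum_comm]
  refine Finset.sum_eq_zero fun i _ => ?_
  have := congrArg (fun z : ℤ => α i * (z : ZMod p)) (h3 i)
  simp only [Int.cast_sum, Int.cast_mul, Int.cast_zero, mul_zero, Finset.mul_sum] at this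
  rw [← this]
  exact Finset.sum_congr rfl fun t _ => by ring

lemma wseq_ne {k : ℕ} (A : Matrix (Fin k) (Fin k) ℤ) (p : ℕ) (α : Fin k → ZMod p)
    (y : Fin k → Fin k → ℤ) (hAp : Int.gcd A.det p = 1) (hBp : Int.gcd (colMat y).det p = 1)
    (hα : α ≠ 0) (j : ℕ) : ∃ l, wseq A p α (y l) j ≠ 0 := by
  by_contra! hc
  apply hα
  set N : Matrix (Fin k) (Fin k) ℤ := A ^ j * colMat y with hN
  have hdet : IsUnit ((N.det : ℤ) : ZMod p) := by
    have u1 : IsUnit ((A.det : ℤ) : ZMod p) := (ZMod.coe_int_isUnit_iff_isCoprime _ _).2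
      (Int.isCoprime_iff_gcd_eq_one.2 hAp).symm
    have u2 : IsUnit (((colMat y).det : ℤ) : ZMod p) := (ZMod.coe_int_isUnit_iff_isCoprime _ _).2
      (Int.isCoprime_iff_gcd_eq_one.2 hBp).symm
    rw [hN, Matrix.det_mul, Matrix.det_pow]
    rw [Int.cast_mul, Int.cast_pow]
    exact (u1.pow j).mul u2
  set Np : Matrix (Fin k) (Fin k) (ZMod p) := N.map (Int.castRingHom (ZMod p)) with hNp
  have hd2 : IsUnit Np.det := by
    rw [hNp]
    have := RingHom.map_det (Int.castRingHom (ZMod p)) N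
    simp only [RingHom.mapMatrix_apply] at this
    rw [← this]; exact hdet
  have hz : Matrix.vecMul α Np = 0 := by
    funext l
    have := hc l
    unfold wseq at this
    simp only [Matrix.vecMul, dotProduct, Pi.zero_apply]
    rw [← this]
    refine Finset.sum_congr rfl fun i _ => ?_
    congr 1
  have := congrArg (fun v => Matrix.vecMul v Np⁻¹) hz
  simpa [Matrix.vecMul_vecMul, Matrix.mul_nonsing_inv _ hd2] using this

lemma far_exists {k : ℕ} (A : Matrix (Fin k) (Fin k) ℤ)
    (hEig : ∀ lam : ℂ, (A.map (Int.cast : ℤ → ℂ)).charpoly.IsRoot lam → lam ≠ 0 ∧ ‖lam‖ ≠ 1)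
    (y : Fin k → Fin k → ℤ) :
    ∃ (δ : ℝ) (L D : ℕ), 0 < δ ∧ δ ≤ 1 / 2 ∧ ∀ p : ℕ, 0 < p → Int.gcd A.det p = 1 →
      Int.gcd (colMat y).det p = 1 → ∀ α : Fin k → ZMod p, α ≠ 0 → ∀ s : ℕ, ∃ i l,
        i ≤ 2 * (Nat.log 2 p + 1) * L + D ∧
        δ * p ≤ |((wseq A p α (y l) (s + i)).valMinAbs : ℝ)| := by
  set f := A.charpoly with hf
  have hfm : f.Monic := Matrix.charpoly_monic A
  have hmap : (A.map (Int.cast : ℤ → ℂ)).charpoly = f.map (Int.castRingHom ℂ) :=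
    Matrix.charpoly_map A (Int.castRingHom ℂ)
  rw [hmap] at hEig
  obtain ⟨L, hL⟩ := decay_iter (f.map (Int.castRingHom ℂ)) (hfm.map _) (fun l hl => (hEig l hl).2)
  set D := f.natDegree
  set C : ℝ := ∑ t ∈ Finset.range (D + 1), |(f.coeff t : ℝ)| with hC
  have hC0 : 0 ≤ C := Finset.sum_nonneg fun _ _ => abs_nonneg _
  refine ⟨1 / (C + 2), L, D, by positivity, ?_, ?_⟩
  · gcongr; linarith
  intro p hp hAp hBp α hα s
  by_contra! hcon
  have hp' : (0:ℝ) < p := by exact_mod_cast hp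
  set m := Nat.log 2 p + 1 with hm
  have hmp : p < 2 ^ m := Nat.lt_pow_succ_log_self (by norm_num) p
  have hmp' : (p:ℝ) < 2 ^ m := by exact_mod_cast hmp
  obtain ⟨l, hl⟩ := wseq_ne A p α y hAp hBp hα (s + m * L)
  apply hl
  set u : ℕ → ℤ := fun i => (wseq A p α (y l) (s + i)).valMinAbs with hu
  have hub : ∀ i, i ≤ 2 * m * L + D → |(u i : ℝ)| < 1 / (C+2) * p := fun i hi => hcon i l hi
  have hrec : ∀ i, i ≤ 2 * m * L → ∑ t ∈ Finset.range (D + 1), f.coeff t * u (i + t) = 0 := by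
    intro i hi
    have hdvd : (p : ℤ) ∣ ∑ t ∈ Finset.range (D + 1), f.coeff t * u (i + t) := by
      rw [← ZMod.intCast_zmod_eq_zero_iff_dvd]
      push_cast
      simp only [hu, ZMod.coe_valMinAbs]
      have := wseq_rec A p α (y l) (s + i)
      simp only [add_assoc] at this ⊢
      exact this
    refine Int.eq_zero_of_abs_lt_dvd hdvd ?_
    have : |((∑ t ∈ Finset.range (D + 1), f.coeff t * u (i + t) : ℤ) : ℝ)| < p := by
      push_cast
      calc _ ≤ ∑ t ∈ Finset.range (D+1), |(f.coeff t : ℝ) * (u (i+t) : ℝ)| :=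
            Finset.abs_sum_le_sum_abs _ _
        _ ≤ ∑ t ∈ Finset.range (D+1), |(f.coeff t : ℝ)| * (1 / (C+2) * p) := by
            refine Finset.sum_le_sum fun t ht => ?_
            rw [abs_mul]
            have := Finset.mem_range.1 ht
            exact mul_le_mul_of_nonneg_left (hub _ (by omega)).le (abs_nonneg _)
        _ = C / (C+2) * p := by rw [← Finset.sum_mul, ← hC]; ring
        _ < 1 * p := by
            gcongr
            rw [div_lt_one (by positivity)]; linarith
        _ = p := one_mul _
    exact_mod_cast this
  have hfin := hL m (fun i => ((u i : ℤ) : ℂ)) (1 / (C+2) * p) (m * L) le_rfl (fun i h1 h2 => ?_)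
  · have h1 : |(u (m * L) : ℝ)| < 1 := by
      have e : ‖((u (m*L) : ℤ) : ℂ)‖ = |(u (m * L) : ℝ)| := by
        simp
      rw [← e]
      calc _ ≤ _ := hfin
        _ ≤ (1/2)^m * (1 * p) := by
          gcongr
          rw [div_le_one (by positivity)]; linarith
        _ < 1 := by
          rw [one_div, inv_pow, one_mul, inv_mul_lt_iff₀ (by positivity)]; linarith
    have h2 : |u (m * L)| < 1 := by exact_mod_cast h1
    have h3 : u (m * L) = 0 := Int.abs_lt_one_iff.1 h2
    exact (ZMod.valMinAbs_eq_zero _).1 h3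
  · have hi : i ≤ 2 * m * L := by
      have : 2 * m * L = m * L + m * L := by ring
      omega
    refine ⟨?_, ?_⟩
    · have e : ‖((u i : ℤ) : ℂ)‖ = |(u i : ℝ)| := by simp
      rw [e]; exact (hub i (by omega)).le
    · rw [Polynomial.aeval_eq_sum_range, hfm.natDegree_map]
      have := congrArg (fun z : ℤ => (z : ℂ)) (hrec i hi)
      simp only [Int.cast_sum, Int.cast_mul, Int.cast_zero] at this
      rw [← this]
      simp [LinearMap.sum_apply, Finset.sum_apply, shiftL_pow]
      rfl

lemma block_prod (φ : ℕ → ℝ) (β : ℝ) (hβ : 0 ≤ β) (T : ℕ) (h0 : ∀ j, 0 ≤ φ j)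
    (h1 : ∀ j, φ j ≤ 1) (hb : ∀ s, ∃ i < T, φ (s + i) ≤ β) (n : ℕ) :
    ∏ j ∈ Finset.range n, φ j ≤ β ^ (n / T) := by
  have hblock : ∀ s, ∏ i ∈ Finset.range T, φ (s + i) ≤ β := by
    intro s
    obtain ⟨i, hi, hib⟩ := hb s
    rw [← Finset.mul_prod_erase _ _ (Finset.mem_range.2 hi)]
    calc _ ≤ β * 1 := by
          gcongr
          · exact Finset.prod_nonneg fun _ _ => h0 _
          · exact Finset.prod_le_one (fun _ _ => h0 _) (fun _ _ => h1 _)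
      _ = β := mul_one _
  have hq : ∀ q, ∏ j ∈ Finset.range (T * q), φ j ≤ β ^ q := by
    intro q
    induction q with
    | zero => simp
    | succ q ih =>
      rw [Nat.mul_succ, Finset.prod_range_add, pow_succ]
      exact mul_le_mul ih (hblock _) (Finset.prod_nonneg fun _ _ => h0 _) (by positivity)
  have e : n = T * (n / T) + n % T := (Nat.div_add_mod n T).symm
  conv_lhs => rw [e]
  rw [Finset.prod_range_add]
  calc _ ≤ β ^ (n/T) * 1 := by
        refine mul_le_mul (hq _) (Finset.prod_le_one (fun _ _ => h0 _) (fun _ _ => h1 _))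
          (Finset.prod_nonneg fun _ _ => h0 _) (by positivity)
    _ = _ := mul_one _

lemma norm_one_add_exp (θ : ℝ) : ‖1 + Complex.exp (2 * Real.pi * Complex.I * θ)‖
    = 2 * |Real.cos (Real.pi * θ)| := by
  have e : 1 + Complex.exp (2 * Real.pi * Complex.I * θ)
      = Complex.exp ((Real.pi * θ : ℝ) * Complex.I) * ((2 * Real.cos (Real.pi * θ) : ℝ) : ℂ) := by
    push_cast
    rw [Complex.two_cos, mul_add, ← Complex.exp_add, ← Complex.exp_add]
    rw [add_comm]
    congr 1
    · congr 1; ring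
    · rw [← Complex.exp_zero]; congr 1; ring
  rw [e, norm_mul, Complex.norm_exp_ofReal_mul_I, one_mul, Complex.norm_real]
  simp

lemma norm_one_add_std {p : ℕ} [NeZero p] (w : ZMod p) (δ : ℝ) (hδ : 0 < δ)
    (hw : δ * p ≤ |(w.valMinAbs : ℝ)|) :
    ‖1 + ZMod.stdAddChar w‖ ≤ 2 * Real.cos (Real.pi * δ) := by
  have hp : (0:ℝ) < p := by exact_mod_cast Nat.pos_of_ne_zero (NeZero.ne p)
  set θ : ℝ := (w.valMinAbs : ℝ) / p with hθ
  have e : (ZMod.stdAddChar w : ℂ) = Complex.exp (2 * Real.pi * Complex.I * θ) := by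
    conv_lhs => rw [← ZMod.coe_valMinAbs w]
    rw [ZMod.stdAddChar_coe, hθ]
    push_cast
    congr 1; ring
  have h1 : δ ≤ |θ| := by
    rw [hθ, abs_div, abs_of_pos hp, le_div_iff₀ hp]; exact hw
  have h2 : |θ| ≤ 1 / 2 := by
    have := ZMod.valMinAbs_mem_Ioc w
    have a1 : (-(p:ℝ)) < (w.valMinAbs : ℝ) * 2 := by exact_mod_cast this.1
    have a2 : (w.valMinAbs : ℝ) * 2 ≤ p := by exact_mod_cast this.2
    rw [hθ, abs_div, abs_of_pos hp, div_le_iff₀ hp, abs_le]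
    constructor <;> linarith
  rw [e, norm_one_add_exp]
  have hpi := Real.pi_pos
  have e2 : Real.cos (Real.pi * θ) = Real.cos (Real.pi * |θ|) := by
    rw [← Real.cos_abs, abs_mul, abs_of_pos hpi]
  rw [e2, abs_of_nonneg]
  · gcongr 2 * ?_
    apply Real.cos_le_cos_of_nonneg_of_le_pi
    · positivity
    · nlinarith
    · gcongr
  · apply Real.cos_nonneg_of_mem_Icc
    constructor <;> nlinarith [abs_nonneg θ]

/-- Fourier transform -/
def ft {k : ℕ} (ν : (Fin k → ℤ) → ℝ) (χ : (Fin k → ℤ) → ℂ) : ℂ := ∑' x, (ν x : ℂ) * χ x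

lemma ft_summable {k : ℕ} (ν : (Fin k → ℤ) → ℝ) (h0 : ∀ x, 0 ≤ ν x) (h1 : Summable ν)
    (χ : (Fin k → ℤ) → ℂ) (hχ : ∀ x, ‖χ x‖ = 1) : Summable (fun x => ‖(ν x : ℂ) * χ x‖) := by
  refine h1.congr fun x => ?_
  rw [norm_mul, hχ, Complex.norm_real, Real.norm_of_nonneg (h0 x), mul_one]

lemma ft_le {k : ℕ} (ν : (Fin k → ℤ) → ℝ) (h0 : ∀ x, 0 ≤ ν x) {c : ℝ} (h1 : HasSum ν c)
    (χ : (Fin k → ℤ) → ℂ) (hχ : ∀ x, ‖χ x‖ = 1) : ‖ft ν χ‖ ≤ c := by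
  have := norm_tsum_le_tsum_norm (ft_summable ν h0 h1.summable χ hχ)
  refine this.trans (le_of_eq ?_)
  rw [← h1.tsum_eq]
  refine tsum_congr fun x => ?_
  rw [norm_mul, hχ, Complex.norm_real, Real.norm_of_nonneg (h0 x), mul_one]

lemma ft_le_of_far {k : ℕ} (μ : (Fin k → ℤ) → ℝ) (h0 : ∀ x, 0 ≤ μ x) (h1 : HasSum μ 1)
    (χ : AddChar (Fin k → ℤ) ℂ) (hχ : ∀ x, ‖χ x‖ = 1) (h g : Fin k → ℤ) (hne : h ≠ g) (t : ℝ)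
    (hth : t ≤ μ h) (htg : t ≤ μ g) (ht : 0 ≤ t) (γ : ℝ) (hγ : ‖1 + χ (h - g)‖ ≤ γ) :
    ‖ft μ χ‖ ≤ 1 - t * (2 - γ) := by
  classical
  set τ : (Fin k → ℤ) → ℝ := fun x => (if x = h then t else 0) + (if x = g then t else 0) with hτ
  have hτs : HasSum τ (t + t) := (hasSum_ite_eq h t).add (hasSum_ite_eq g t)
  have hle : ∀ x, 0 ≤ μ x - τ x := by
    intro x
    simp only [hτ]
    by_cases a : x = h
    · have : x ≠ g := a ▸ hne
      simp [a, hne, hth]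
    · by_cases b : x = g
      · simp [b, Ne.symm hne, htg]
      · simp [a, b, h0 x]
  have hb := ft_le (fun x => μ x - τ x) hle (h1.sub hτs) χ hχ
  have hs1 := (ft_summable (fun x => μ x - τ x) hle (h1.sub hτs).summable χ hχ).of_norm
  have hτf : HasSum (fun x => (τ x : ℂ) * χ x) (t * χ h + t * χ g) := by
    have a1 : HasSum (fun x => if x = h then (t : ℂ) * χ h else 0) (t * χ h) := hasSum_ite_eq h _
    have a2 : HasSum (fun x => if x = g then (t : ℂ) * χ g else 0) (t * χ g) := hasSum_ite_eq g _
    convert a1.add a2 using 1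
    funext x
    simp only [hτ]
    push_cast
    rw [add_mul]
    congr 1 <;> split_ifs with hh <;> simp [hh]
  have hsum : ft μ χ = ft (fun x => μ x - τ x) χ + (t * χ h + t * χ g) := by
    have := (hs1.hasSum.add hτf).tsum_eq
    unfold ft
    rw [← this]
    refine tsum_congr fun x => ?_
    push_cast; ring
  have hhg : χ h = χ (h - g) * χ g := by rw [← AddChar.map_add_eq_mul, sub_add_cancel]
  have hn : ‖(t : ℂ) * χ h + t * χ g‖ ≤ t * γ := by
    have : (t : ℂ) * χ h + t * χ g = t * ((1 + χ (h - g)) * χ g) := by rw [hhg]; ring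
    rw [this, norm_mul, norm_mul, hχ, mul_one, Complex.norm_real, Real.norm_of_nonneg ht]
    gcongr
  rw [hsum]
  calc _ ≤ _ := norm_add_le _ _
    _ ≤ (1 - (t+t)) + t * γ := add_le_add hb hn
    _ = _ := by ring

/-- pull back a character by `A` -/
def pull {k : ℕ} (A : Matrix (Fin k) (Fin k) ℤ) (χ : AddChar (Fin k → ℤ) ℂ) :
    AddChar (Fin k → ℤ) ℂ := χ.compAddMonoidHom A.mulVecLin.toAddMonoidHom

lemma pull_apply {k : ℕ} (A : Matrix (Fin k) (Fin k) ℤ) (χ : AddChar (Fin k → ℤ) ℂ) (x) :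
    pull A χ x = χ (A.mulVec x) := rfl

/-- reindexing -/
def eqv {k : ℕ} (A : Matrix (Fin k) (Fin k) ℤ) :
    ((Fin k → ℤ) × (Fin k → ℤ)) ≃ ((Fin k → ℤ) × (Fin k → ℤ)) where
  toFun q := (q.2, q.1 - A.mulVec q.2)
  invFun q := (q.2 + A.mulVec q.1, q.1)
  left_inv q := by simp
  right_inv q := by simp

lemma chain_facts {k : ℕ} (A : Matrix (Fin k) (Fin k) ℤ) (μ : (Fin k → ℤ) → ℝ)
    (h0 : ∀ x, 0 ≤ μ x) (h1 : HasSum μ 1) (n : ℕ) :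
    (∀ x, 0 ≤ chainDist A μ n x) ∧ HasSum (chainDist A μ n) 1 := by
  induction n with
  | zero =>
    refine ⟨fun x => ?_, ?_⟩
    · simp only [chainDist]; split_ifs <;> norm_num
    · exact hasSum_ite_eq 0 (1:ℝ)
  | succ n ih =>
    refine ⟨fun x => ?_, ?_⟩
    · simp only [chainDist]; exact tsum_nonneg fun y => mul_nonneg (ih.1 _) (h0 _)
    · have hs := ih.2.summable.mul_of_nonneg h1.summable ih.1 h0
      have hm : HasSum (fun q : (Fin k → ℤ) × (Fin k → ℤ) => chainDist A μ n q.1 * μ q.2) (1 * 1) :=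
        ih.2.mul h1 hs
      have hm2 := (eqv A).hasSum_iff.2 hm
      rw [mul_one] at hm2
      have := hm2.prod_fiberwise (fun x => (hm2.summable.prod_factor x).hasSum)
      exact this

lemma hasSum_mul_aux {ι κ : Type*} (a : ι → ℂ) (b : κ → ℂ) (ha : Summable (fun x => ‖a x‖))
    (hb : Summable (fun x => ‖b x‖)) :
    HasSum (fun q : ι × κ => a q.1 * b q.2) ((∑' x, a x) * ∑' x, b x) :=
  ha.of_norm.hasSum.mul hb.of_norm.hasSum (summable_mul_of_summable_norm ha hb)

lemma conv_aux {k : ℕ} (A : Matrix (Fin k) (Fin k) ℤ) (a b : (Fin k → ℤ) → ℂ)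
    (ha : Summable (fun x => ‖a x‖)) (hb : Summable (fun x => ‖b x‖)) :
    ∑' x, ∑' y, a y * b (x - A.mulVec y) = (∑' x, a x) * ∑' x, b x := by
  have hm := hasSum_mul_aux a b ha hb
  have hm2 : HasSum (fun q : (Fin k → ℤ) × (Fin k → ℤ) => a q.2 * b (q.1 - A.mulVec q.2))
      ((∑' x, a x) * ∑' x, b x) := (eqv A).hasSum_iff.2 hm
  exact (hm2.prod_fiberwise (fun x => (hm2.summable.prod_factor x).hasSum)).tsum_eq

lemma ft_chain_succ {k : ℕ} (A : Matrix (Fin k) (Fin k) ℤ) (μ : (Fin k → ℤ) → ℝ)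
    (h0 : ∀ x, 0 ≤ μ x) (h1 : HasSum μ 1) (n : ℕ) (χ : AddChar (Fin k → ℤ) ℂ)
    (hχ : ∀ x, ‖χ x‖ = 1) :
    ft (chainDist A μ (n+1)) χ = ft (chainDist A μ n) (pull A χ) * ft μ χ := by
  obtain ⟨c0, c1⟩ := chain_facts A μ h0 h1 n
  have e : chainDist A μ (n+1) = fun x => ∑' y, chainDist A μ n y * μ (x - A.mulVec y) := rfl
  rw [e]
  generalize chainDist A μ n = ν at *
  have sn1 := ft_summable ν c0 c1.summable (pull A χ)
    (fun x => by rw [pull_apply]; exact hχ _)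
  have sn2 := ft_summable μ h0 h1.summable χ hχ
  have hm := conv_aux A _ _ sn1 sn2
  unfold ft
  rw [← hm]
  refine tsum_congr fun x => ?_
  rw [Complex.ofReal_tsum, ← tsum_mul_right]
  refine tsum_congr fun y => ?_
  rw [pull_apply]
  have : χ x = χ (A.mulVec y) * χ (x - A.mulVec y) := by
    rw [← AddChar.map_add_eq_mul]; congr 1; abel
  rw [this]; push_cast; ring

lemma ft_chain {k : ℕ} (A : Matrix (Fin k) (Fin k) ℤ) (μ : (Fin k → ℤ) → ℝ)
    (h0 : ∀ x, 0 ≤ μ x) (h1 : HasSum μ 1) (n : ℕ) : ∀ (χ : AddChar (Fin k → ℤ) ℂ)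
    (_ : ∀ x, ‖χ x‖ = 1),
    ft (chainDist A μ n) χ = ∏ j ∈ Finset.range n, ft μ (pull (A ^ j) χ) := by
  induction n with
  | zero =>
    intro χ _
    simp only [ft, chainDist, Finset.range_zero, Finset.prod_empty]
    rw [tsum_eq_single 0]
    · simp
    · intro b hb; simp [hb]
  | succ n ih =>
    intro χ hχ
    rw [ft_chain_succ A μ h0 h1 n χ hχ, ih (pull A χ) (fun x => by rw [pull_apply]; exact hχ _), Finset.prod_range_succ']
    congr 1
    · refine Finset.prod_congr rfl fun j _ => ?_
      congr 2
      ext x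
      simp [pull_apply, pow_succ', Matrix.mulVec_mulVec]
    · congr 2
      ext x
      simp [pull_apply]

/-- dot product as a hom -/
def dotHom {k : ℕ} (p : ℕ) (α : Fin k → ZMod p) : (Fin k → ℤ) →+ ZMod p where
  toFun x := ∑ i, α i * ((x i : ℤ) : ZMod p)
  map_zero' := by simp
  map_add' x y := by simp [mul_add, Finset.sum_add_distrib]

/-- the character of `ℤ^k` attached to `α` -/
def chi {k : ℕ} (p : ℕ) [NeZero p] (α : Fin k → ZMod p) : AddChar (Fin k → ℤ) ℂ :=
  (ZMod.stdAddChar (N := p)).compAddMonoidHom (dotHom p α)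

lemma chi_apply {k : ℕ} (p : ℕ) [NeZero p] (α : Fin k → ZMod p) (x : Fin k → ℤ) :
    chi p α x = ZMod.stdAddChar (∑ i, α i * ((x i : ℤ) : ZMod p)) := rfl

lemma chi_norm {k : ℕ} (p : ℕ) [NeZero p] (α : Fin k → ZMod p) (x : Fin k → ℤ) :
    ‖chi p α x‖ = 1 := by rw [chi_apply]; exact AddChar.norm_apply _ _

lemma orth {k : ℕ} (p : ℕ) [NeZero p] (x : Fin k → ZMod p) :
    ∑ α : Fin k → ZMod p, (ZMod.stdAddChar (∑ i, α i * x i) : ℂ)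
      = if x = 0 then (p : ℂ) ^ k else 0 := by
  have h1 : ∀ α : Fin k → ZMod p, (ZMod.stdAddChar (∑ i, α i * x i) : ℂ)
      = ∏ i, ZMod.stdAddChar (α i * x i) := fun α => by
    have := map_prod (ZMod.stdAddChar (N := p)).toMonoidHom
      (fun i => Multiplicative.ofAdd (α i * x i)) Finset.univ
    simpa [← ofAdd_sum] using this
  simp only [h1]
  have h2 := Finset.prod_univ_sum (fun _ : Fin k => (Finset.univ : Finset (ZMod p)))
    (fun i a => (ZMod.stdAddChar (a * x i) : ℂ))
  rw [Fintype.piFinset_univ] at h2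
  rw [← h2]
  simp only [AddChar.sum_mulShift _ (ZMod.isPrimitive_stdAddChar p), ZMod.card]
  split_ifs with h
  · simp [h]
  · obtain ⟨i, hi⟩ := Function.ne_iff.1 h
    exact Finset.prod_eq_zero (Finset.mem_univ i) (by simp at hi; simp [hi])

lemma parseval {k : ℕ} (p : ℕ) [NeZero p] (f : (Fin k → ZMod p) → ℝ) :
    ∑ α : Fin k → ZMod p, ‖∑ x, (f x : ℂ) * ZMod.stdAddChar (∑ i, α i * x i)‖ ^ 2
      = (p : ℝ) ^ k * ∑ x, f x ^ 2 := by
  have hC : (((∑ α : Fin k → ZMod p,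
      ‖∑ x, (f x : ℂ) * ZMod.stdAddChar (∑ i, α i * x i)‖ ^ 2 : ℝ)) : ℂ)
      = (((p : ℝ) ^ k * ∑ x, f x ^ 2 : ℝ) : ℂ) := by
    push_cast
    have h1 : ∀ α : Fin k → ZMod p,
        ((‖∑ x, (f x : ℂ) * ZMod.stdAddChar (∑ i, α i * x i)‖ : ℂ) ^ 2)
        = ∑ x, ∑ x', (f x : ℂ) * f x' * ZMod.stdAddChar (∑ i, α i * (x i - x' i)) := by
      intro α
      rw [← Complex.mul_conj', map_sum, Finset.sum_mul_sum]
      refine Finset.sum_congr rfl fun x _ => Finset.sum_congr rfl fun x' _ => ?_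
      rw [map_mul, Complex.conj_ofReal, ← AddChar.map_neg_eq_conj]
      have : (ZMod.stdAddChar (∑ i, α i * (x i - x' i)) : ℂ)
          = ZMod.stdAddChar (∑ i, α i * x i) * ZMod.stdAddChar (-∑ i, α i * x' i) := by
        rw [← AddChar.map_add_eq_mul]
        congr 1
        simp only [mul_sub, Finset.sum_sub_distrib]
        exact sub_eq_add_neg _ _
      rw [this]; ring
    simp only [h1]
    rw [Finset.sum_comm, Finset.mul_sum]
    refine Finset.sum_congr rfl fun x _ => ?_
    rw [Finset.sum_comm]
    rw [Finset.sum_eq_single x]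
    · rw [← Finset.mul_sum]
      have := orth p (fun i => x i - x i)
      rw [this, if_pos (by funext i; simp)]
      ring
    · intro x' _ hx'
      rw [← Finset.mul_sum]
      have := orth p (fun i => x i - x' i)
      rw [this, if_neg, mul_zero]
      intro h
      apply hx'
      funext i
      have := congrFun h i
      exact (sub_eq_zero.1 this).symm
    · simp
  exact_mod_cast hC

lemma ft_mod {k : ℕ} (p : ℕ) [NeZero p] (A : Matrix (Fin k) (Fin k) ℤ) (μ : (Fin k → ℤ) → ℝ)
    (h0 : ∀ x, 0 ≤ μ x) (h1 : HasSum μ 1) (n : ℕ) (α : Fin k → ZMod p) :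
    ∑ x : Fin k → ZMod p, (chainDistMod A μ p n x : ℂ) * ZMod.stdAddChar (∑ i, α i * x i)
      = ft (chainDist A μ n) (chi p α) := by
  obtain ⟨c0, c1⟩ := chain_facts A μ h0 h1 n
  unfold chainDistMod
  generalize chainDist A μ n = ν at *
  have hs := (ft_summable ν c0 c1.summable (chi p α) (chi_norm p α)).of_norm.hasSum
  have := hs.tsum_fiberwise (fun (y : Fin k → ℤ) (i : Fin k) => ((y i : ℤ) : ZMod p))
  unfold ft
  rw [← this.tsum_eq, tsum_fintype]
  refine Finset.sum_congr rfl fun x _ => ?_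
  rw [Complex.ofReal_tsum, ← tsum_mul_right]
  refine tsum_congr fun z => ?_
  obtain ⟨z, hz⟩ := z
  subst hz
  rfl

lemma upper_bound {k : ℕ} (p : ℕ) [NeZero p] (A : Matrix (Fin k) (Fin k) ℤ)
    (μ : (Fin k → ℤ) → ℝ)
    (h0 : ∀ x, 0 ≤ μ x) (h1 : HasSum μ 1) (n : ℕ) (b : ℝ)
    (hb : ∀ α : Fin k → ZMod p, α ≠ 0 → ‖ft (chainDist A μ n) (chi p α)‖ ≤ b) :
    (2 * tvDist A μ p n) ^ 2 ≤ (p : ℝ) ^ k * b ^ 2 := by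
  have hp : (p : ℂ) ≠ 0 := by exact_mod_cast NeZero.ne p
  unfold tvDist
  rw [tsum_fintype]
  set f : (Fin k → ZMod p) → ℝ := fun x => chainDistMod A μ p n x - unif k p with hf
  have hcard : (Finset.univ : Finset (Fin k → ZMod p)).card = p ^ k := by
    simp [ZMod.card]
  have e : 2 * (1 / 2 * ∑ x, |f x|) = ∑ x, |f x| := by ring
  have hcs := sq_sum_le_card_mul_sum_sq (s := (Finset.univ : Finset (Fin k → ZMod p)))
    (f := fun x => |f x|)
  simp only [sq_abs] at hcs
  rw [hcard] at hcs
  push_cast at hcs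
  rw [← parseval] at hcs
  rw [e]
  refine hcs.trans ?_
  have hF : ∀ α : Fin k → ZMod p, ∑ x, (f x : ℂ) * ZMod.stdAddChar (∑ i, α i * x i)
      = ft (chainDist A μ n) (chi p α) - if α = 0 then 1 else 0 := by
    intro α
    rw [← ft_mod p A μ h0 h1]
    simp only [hf, Complex.ofReal_sub, sub_mul, Finset.sum_sub_distrib]
    congr 1
    rw [← Finset.mul_sum]
    have := orth p α
    simp only [mul_comm] at this ⊢
    rw [this]
    unfold unif
    split_ifs
    · push_cast; field_simp
    · simp
  have hF2 : ∀ α : Fin k → ZMod p,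
      ‖∑ x, (f x : ℂ) * ZMod.stdAddChar (∑ i, α i * x i)‖ ^ 2 ≤ b ^ 2 := by
    intro α
    rw [hF]
    split_ifs with h
    · have : ft (chainDist A μ n) (chi p α) = 1 := by
        obtain ⟨c0, c1⟩ := chain_facts A μ h0 h1 n
        unfold ft
        subst h
        simp only [chi_apply, Pi.zero_apply, zero_mul, Finset.sum_const_zero,
          AddChar.map_zero_eq_one, mul_one]
        rw [← Complex.ofReal_tsum, c1.tsum_eq]; simp
      rw [this]; simp; positivity
    · rw [sub_zero]
      gcongr
      exact hb α h
  calc _ ≤ ∑ α : Fin k → ZMod p, b ^ 2 := Finset.sum_le_sum fun α _ => hF2 α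
    _ = _ := by rw [Finset.sum_const, hcard]; simp

lemma ft_block {k : ℕ}
    (A : Matrix (Fin k) (Fin k) ℤ)
    (hEig : ∀ lam : ℂ, (A.map (Int.cast : ℤ → ℂ)).charpoly.IsRoot lam →
      lam ≠ 0 ∧ ‖lam‖ ≠ 1)
    (μ : (Fin k → ℤ) → ℝ) (hμ0 : ∀ x, 0 ≤ μ x) (hμ1 : HasSum μ 1)
    (y : Fin k → (Fin k → ℤ)) (hy : ∀ j, y j ∈ VdSet A μ)
    (hybasis : (colMat y).det ≠ 0) :
    ∃ (β : ℝ) (L E : ℕ), 0 < β ∧ β < 1 ∧ 1 ≤ E ∧ ∀ (p : ℕ) [NeZero p], Int.gcd A.det p = 1 →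
      Int.gcd (colMat y).det p = 1 → ∀ α : Fin k → ZMod p, α ≠ 0 → ∀ n : ℕ,
      ‖ft (chainDist A μ n) (chi p α)‖ ≤ β ^ (n / (2 * (Nat.log 2 p + 1) * L + E)) := by
  obtain ⟨δ, L, D, hδ, hδ2, hfar⟩ := far_exists A hEig y
  have hy' : ∀ j, ∃ (h g : Fin k → ℤ) (m : ℕ), 0 < μ h ∧ 0 < μ g ∧ h ≠ g ∧
      y j = (A ^ m).mulVec (h - g) := by
    intro j
    obtain ⟨x, ⟨h, g, hh, hg, hx⟩, m, _, hm⟩ := hy j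
    refine ⟨h, g, m, lt_of_le_of_ne (hμ0 h) (Ne.symm hh), lt_of_le_of_ne (hμ0 g) (Ne.symm hg),
      ?_, by rw [hm, hx]⟩
    rintro rfl
    apply hybasis
    apply Matrix.det_eq_zero_of_column_eq_zero j
    intro i
    simp [colMat, hm, hx]
  choose h g m hh hg hne hm using hy'
  obtain ⟨t, ht0, ht⟩ : ∃ t : ℝ, 0 < t ∧ ∀ l, t ≤ μ (h l) ∧ t ≤ μ (g l) := by
    rcases isEmpty_or_nonempty (Fin k) with he | he
    · exact ⟨1, one_pos, fun l => he.elim l⟩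
    · obtain ⟨l, hl⟩ := Finite.exists_min (fun l => min (μ (h l)) (μ (g l)))
      refine ⟨_, lt_min (hh l) (hg l), fun l' => ?_⟩
      exact ⟨(hl l').trans (min_le_left _ _), (hl l').trans (min_le_right _ _)⟩
  set γ : ℝ := 2 * Real.cos (Real.pi * δ) with hγ
  have hγ2 : γ < 2 := by
    have hpi := Real.pi_pos
    have : Real.cos (Real.pi * δ) < Real.cos 0 :=
      Real.cos_lt_cos_of_nonneg_of_le_pi le_rfl (by nlinarith) (by positivity)
    rw [Real.cos_zero] at this
    linarith
  set Mx : ℕ := ∑ l, m l with hMx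
  have hmM : ∀ l, m l ≤ Mx := fun l => Finset.single_le_sum (fun _ _ => Nat.zero_le _)
    (Finset.mem_univ l)
  refine ⟨max (1/2) (1 - t * (2 - γ)), L, D + Mx + 1, by positivity, ?_, by omega, ?_⟩
  · rw [max_lt_iff]
    refine ⟨by norm_num, ?_⟩
    have : 0 < t * (2 - γ) := mul_pos ht0 (by linarith)
    linarith
  intro p _ hAp hBp α hα n
  have hpn : ∀ j x, ‖pull (A ^ j) (chi p α) x‖ = 1 := fun j x => by
    rw [pull_apply]; exact chi_norm _ _ _
  rw [ft_chain A μ hμ0 hμ1 n (chi p α) (chi_norm p α), norm_prod]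
  refine block_prod (fun j => ‖ft μ (pull (A ^ j) (chi p α))‖) _ (by positivity) _
    (fun j => norm_nonneg _) (fun j => ft_le μ hμ0 hμ1 _ (hpn j)) ?_ n
  intro s
  obtain ⟨i, l, hi, hw⟩ := hfar p (Nat.pos_of_ne_zero (NeZero.ne p)) hAp hBp α hα s
  refine ⟨i + m l, by have := hmM l; omega, ?_⟩
  refine (ft_le_of_far μ hμ0 hμ1 _ (hpn _) (h l) (g l) (hne l) t (ht l).1 (ht l).2 ht0.le γ
    ?_).trans (le_max_right _ _)
  have e : pull (A ^ (s + (i + m l))) (chi p α) (h l - g l)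
      = ZMod.stdAddChar (wseq A p α (y l) (s + i)) := by
    rw [pull_apply, chi_apply, wseq, hm l, Matrix.mulVec_mulVec, ← pow_add, add_assoc]
  rw [e]
  exact norm_one_add_std _ δ hδ hw

lemma numeric (β : ℝ) (hβ0 : 0 < β) (hβ1 : β < 1) (L E k : ℕ) (hE : 1 ≤ E) :
    ∃ c : ℝ, 0 < c ∧ ∀ p : ℕ, 2 ≤ p → ∀ n : ℕ, c * (Real.log p) ^ 2 ≤ n →
      (p:ℝ)^k * (β ^ (n / (2 * (Nat.log 2 p + 1) * L + E))) ^ 2 ≤ (β⁻¹ / p) ^ 2 := by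
  have hl2 : 0 < Real.log 2 := Real.log_pos (by norm_num)
  have hE' : (1:ℝ) ≤ E := by exact_mod_cast hE
  have hlb : 0 < - Real.log β := by have := Real.log_neg hβ0 hβ1; linarith
  set c1 : ℝ := (4 * L + E) / Real.log 2 with hc1
  have hc1p : 0 < c1 := by positivity
  refine ⟨c1 * (k+1) / (-Real.log β), by positivity, fun p hp n hn => ?_⟩
  have hp2 : (2:ℝ) ≤ p := by exact_mod_cast hp
  have hp0 : (0:ℝ) < p := by linarith
  have hlp : Real.log 2 ≤ Real.log p := Real.log_le_log (by norm_num) hp2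
  have hlp0 : 0 < Real.log p := by linarith
  set T : ℕ := 2 * (Nat.log 2 p + 1) * L + E with hT
  have hTpos : 0 < T := by omega
  have hTpos' : (0:ℝ) < T := by exact_mod_cast hTpos
  have hnl : (Nat.log 2 p : ℝ) ≤ Real.log p / Real.log 2 := by
    rw [le_div_iff₀ hl2, ← Real.log_pow]
    apply Real.log_le_log (by positivity)
    exact_mod_cast Nat.pow_log_le_self 2 (by omega)
  have hx1 : 1 ≤ Real.log p / Real.log 2 := by rw [le_div_iff₀ hl2]; linarith
  have hTle : (T : ℝ) ≤ c1 * Real.log p := by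
    have e : c1 * Real.log p = (4 * L + E) * (Real.log p / Real.log 2) := by rw [hc1]; ring
    rw [e, hT]
    push_cast
    have hL0 : (0:ℝ) ≤ L := by positivity
    nlinarith [mul_le_mul_of_nonneg_left hnl hL0, mul_le_mul_of_nonneg_left hx1 hL0]
  set q := n / T with hq
  have hqn : (n : ℝ) ≤ (q + 1) * T := by
    have : n < (q + 1) * T := by rw [hq]; rw [mul_comm]; exact Nat.lt_mul_div_succ n hTpos
    exact_mod_cast this.le
  have hq1 : (k+1) * Real.log p ≤ (q + 1) * (-Real.log β) := by
    have h1 : c1 * (k+1) / (-Real.log β) * Real.log p ^ 2 ≤ (q+1) * (c1 * Real.log p) :=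
      hn.trans (hqn.trans (by gcongr))
    have h2 : c1 * (k+1) / (-Real.log β) * Real.log p ^ 2
      = ((k+1) * Real.log p / (-Real.log β)) * (c1 * Real.log p) := by ring
    rw [h2] at h1
    have h3 := le_of_mul_le_mul_right h1 (by positivity)
    rwa [div_le_iff₀ hlb] at h3
  have hb : β ^ (q + 1) ≤ ((p:ℝ)^(k+1))⁻¹ := by
    rw [← Real.log_le_log_iff (by positivity) (by positivity), Real.log_inv, Real.log_pow,
      Real.log_pow]
    push_cast
    linarith
  have hb2 : β ^ q ≤ β⁻¹ * ((p:ℝ)^(k+1))⁻¹ := by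
    rw [le_inv_mul_iff₀ hβ0, ← pow_succ']; exact hb
  calc (p:ℝ)^k * (β ^ q)^2 ≤ (p:ℝ)^k * (β⁻¹ * ((p:ℝ)^(k+1))⁻¹)^2 := by gcongr
    _ = (β⁻¹ / p)^2 * ((p:ℝ)^k)⁻¹ := by field_simp; ring
    _ ≤ (β⁻¹ / p)^2 * 1 := by
      gcongr
      exact inv_le_one_of_one_le₀ (one_le_pow₀ (by linarith))
    _ = _ := mul_one _

/-- **Theorem 3.1**: if all (complex) eigenvalues `λ` of `A` are nonzero and satisfy
`|λ| ≠ 1`, and the support of `μ` is not parallel to a proper subspace of `ℚ^k` invariant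
under `A`, then there is `c > 0` such that for all `p` with
`gcd(det A, p) = gcd(det B, p) = 1` and all `n ≥ c (ln p)²`, `‖P_n − U‖ ≤ ε(p)` where
`ε(p) → 0` as `p → ∞`. -/
theorem uniformity_ln_sq (k : ℕ) (hk : 1 ≤ k)
    (A : Matrix (Fin k) (Fin k) ℤ) (hA : A.det ≠ 0)
    (hEig : ∀ lam : ℂ, (A.map (Int.cast : ℤ → ℂ)).charpoly.IsRoot lam →
      lam ≠ 0 ∧ ‖lam‖ ≠ 1)
    (μ : (Fin k → ℤ) → ℝ) (hμ0 : ∀ x, 0 ≤ μ x) (hμ1 : HasSum μ 1)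
    (hpar : ¬ ParallelInv A μ)
    (y : Fin k → (Fin k → ℤ)) (hy : ∀ j, y j ∈ VdSet A μ)
    (hybasis : (colMat y).det ≠ 0) :
    ∃ (c : ℝ) (ε : ℕ → ℝ), 0 < c ∧ Filter.Tendsto ε Filter.atTop (nhds 0) ∧
      ∀ p : ℕ, 0 < p → Int.gcd A.det p = 1 → Int.gcd (colMat y).det p = 1 →
        ∀ n : ℕ, c * (Real.log p) ^ 2 ≤ n → tvDist A μ p n ≤ ε p := by
  obtain ⟨β, L, E, hβ0, hβ1, hE, hblk⟩ := ft_block A hEig μ hμ0 hμ1 y hy hybasis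
  obtain ⟨c, hc, hnum⟩ := numeric β hβ0 hβ1 L E k hE
  refine ⟨c, fun p => β⁻¹ / p, hc, ?_, ?_⟩
  · exact tendsto_const_div_atTop_nhds_zero_nat _
  intro p hp hAp hBp n hn
  haveI : NeZero p := ⟨hp.ne'⟩
  have hp0 : (0:ℝ) < p := by exact_mod_cast hp
  have hε : 0 < β⁻¹ / (p:ℝ) := by positivity
  have htv : 0 ≤ tvDist A μ p n :=
    mul_nonneg (by norm_num) (tsum_nonneg fun _ => abs_nonneg _)
  have hsq : (2 * tvDist A μ p n) ^ 2 ≤ (β⁻¹ / p) ^ 2 := by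
    rcases Nat.lt_or_ge p 2 with h | h
    · have hp1 : p = 1 := by omega
      subst hp1
      refine (upper_bound 1 A μ hμ0 hμ1 n 0 (fun α hα => ?_)).trans ?_
      · exact absurd (Subsingleton.elim α 0) hα
      · simp; positivity
    · exact (upper_bound p A μ hμ0 hμ1 n _ (fun α hα => hblk p hAp hBp α hα n)).trans
        (hnum p h n hn)
  have := (pow_le_pow_iff_left₀ (by positivity) hε.le two_ne_zero).1 hsq
  linarith
end
end

section
/- Assume A has complex eigenvalues λ_1, …, λ_k, all nonzero, with |λ_i| ≠ 1 for every i. Then there exist δ ∈ (0, 1/2), a constant c̄ > 0, and N ∈ ℕ such that for every integer p > N with gcd(det(A), p) = 1 and every α ∈ (ℤ/pℤ)^k with α ≠ 0, there exists a positive integer j̄ ≤ c̄·ln p such that the vector of fractional parts of ᵗA^{j̄} α / p has at least one component in the interval [δ, 1−δ]. -/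
open scoped BigOperators
open Matrix

noncomputable section

/-- Smallness of the operator `R(T)` along orbit windows of length `d`. -/
def WinSmall {V : Type*} [NormedAddCommGroup V] [NormedSpace ℂ V] (T : Module.End ℂ V)
    (R : Polynomial ℂ) (e : ℝ) (d : ℕ) : Prop :=
  ∀ (v : V) (M : ℝ), (∀ i ≤ d, ‖(T ^ i) v‖ ≤ M) → ‖(Polynomial.aeval T R) v‖ ≤ e * M

lemma WinSmall.mono {V : Type*} [NormedAddCommGroup V] [NormedSpace ℂ V] {T : Module.End ℂ V}
    {R : Polynomial ℂ} {e : ℝ} {d d' : ℕ} (h : WinSmall T R e d) (hd : d ≤ d') :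
    WinSmall T R e d' := fun v M hv => h v M fun i hi => hv i (hi.trans hd)

lemma winSmall_mono {V : Type*} [NormedAddCommGroup V] [NormedSpace ℂ V] (T : Module.End ℂ V)
    (c : ℂ) (n : ℕ) : WinSmall T (Polynomial.C c * Polynomial.X ^ n) ‖c‖ n := by
  intro v M h
  have : (Polynomial.aeval T (Polynomial.C c * Polynomial.X ^ n)) v = c • (T ^ n) v := by
    simp
  rw [this, norm_smul]
  exact mul_le_mul_of_nonneg_left (h n le_rfl) (norm_nonneg _)

lemma WinSmall.add {V : Type*} [NormedAddCommGroup V] [NormedSpace ℂ V] {T : Module.End ℂ V}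
    {R R' : Polynomial ℂ} {e e' : ℝ} {d : ℕ} (h : WinSmall T R e d) (h' : WinSmall T R' e' d) :
    WinSmall T (R + R') (e + e') d := by
  intro v M hv
  rw [map_add, LinearMap.add_apply, add_mul]
  exact (norm_add_le _ _).trans (add_le_add (h v M hv) (h' v M hv))

lemma WinSmall.mul {V : Type*} [NormedAddCommGroup V] [NormedSpace ℂ V] {T : Module.End ℂ V}
    {R R' : Polynomial ℂ} {e e' : ℝ} {d d' : ℕ} (h : WinSmall T R e d)
    (h' : WinSmall T R' e' d') :
    WinSmall T (R * R') (e * e') (d + d') := by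
  intro v M hv
  rw [map_mul, Module.End.mul_apply, mul_assoc]
  apply h
  intro i hi
  have hc : (T ^ i) ((Polynomial.aeval T R') v) = (Polynomial.aeval T R') ((T ^ i) v) := by
    rw [← Module.End.mul_apply, ← Module.End.mul_apply]
    congr 1
    have : T ^ i = Polynomial.aeval T (Polynomial.X ^ i : Polynomial ℂ) := by simp
    rw [this, ← map_mul, ← map_mul, mul_comm]
  rw [hc]
  apply h'
  intro j hj
  rw [← Module.End.mul_apply, ← pow_add]
  exact hv _ (by omega)

lemma winSmall_X {V : Type*} [NormedAddCommGroup V] [NormedSpace ℂ V] (T : Module.End ℂ V)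
    (n : ℕ) : WinSmall T (Polynomial.X ^ n) 1 n := by
  have := winSmall_mono T 1 n
  simpa using this

lemma exists_factor {V : Type*} [NormedAddCommGroup V] [NormedSpace ℂ V] (T : Module.End ℂ V)
    (z : ℂ) (hz : ‖z‖ ≠ 1) (e : ℝ) (he : 0 < e) :
    ∃ (a d : ℕ) (R : Polynomial ℂ), (Polynomial.X - Polynomial.C z) ∣ Polynomial.X ^ a + R ∧
      ∃ e' : ℝ, 0 ≤ e' ∧ e' < e ∧ WinSmall T R e' d := by
  rcases lt_or_gt_of_ne hz with h | h
  · obtain ⟨n, hn⟩ := exists_pow_lt_of_lt_one he h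
    refine ⟨n, 0, Polynomial.C (-z ^ n) * Polynomial.X ^ 0, ?_, ‖-z ^ n‖, norm_nonneg _, ?_,
      winSmall_mono T _ 0⟩
    · rw [Polynomial.dvd_iff_isRoot]
      simp
    · simpa using hn
  · have h1 : ‖z⁻¹‖ < 1 := by
      rw [norm_inv]; exact inv_lt_one_of_one_lt₀ h
    have hz0 : z ≠ 0 := by
      rintro rfl; simp at h; linarith
    obtain ⟨n, hn⟩ := exists_pow_lt_of_lt_one he h1
    refine ⟨0, n, Polynomial.C (-z⁻¹ ^ n) * Polynomial.X ^ n, ?_, ‖-z⁻¹ ^ n‖, norm_nonneg _, ?_,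
      winSmall_mono T _ n⟩
    · rw [Polynomial.dvd_iff_isRoot]
      simp [hz0]
    · simpa using hn

lemma exists_prod {V : Type*} [NormedAddCommGroup V] [NormedSpace ℂ V] (T : Module.End ℂ V)
    (s : Multiset ℂ) : (∀ z ∈ s, ‖z‖ ≠ 1) → ∀ (e : ℝ), 0 < e →
    ∃ (a d : ℕ) (R : Polynomial ℂ),
      (s.map fun z => Polynomial.X - Polynomial.C z).prod ∣ Polynomial.X ^ a + R ∧
      ∃ e' : ℝ, 0 ≤ e' ∧ e' < e ∧ WinSmall T R e' d := by
  induction s using Multiset.induction_on with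
  | empty =>
    intro _ e he
    refine ⟨0, 0, 0, by simp, 0, le_rfl, he, ?_⟩
    intro v M _
    simp
  | cons z s ih =>
    intro hs e he
    have he1 : 0 < min (e / 3) 1 := by positivity
    obtain ⟨a, d, R, hR, e1, h0, h1, hW⟩ :=
      exists_factor T z (hs z (by simp)) _ he1
    obtain ⟨a', d', R', hR', e2, h0', h1', hW'⟩ :=
      ih (fun z hz => hs z (by simp [hz])) _ he1
    have hl := h1.trans_le (min_le_left _ _)
    have hl' := h1'.trans_le (min_le_left _ _)
    have hr := h1.trans_le (min_le_right _ _)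
    refine ⟨a + a', (a + d') + (d + a') + (d + d'),
      Polynomial.X ^ a * R' + R * Polynomial.X ^ a' + R * R', ?_,
      1 * e2 + e1 * 1 + e1 * e2, by positivity, by nlinarith, ?_⟩
    · rw [Multiset.map_cons, Multiset.prod_cons]
      have := mul_dvd_mul hR hR'
      convert this using 1
      ring
    · exact ((((winSmall_X T a).mul hW').mono (by omega)).add
        ((hW.mul (winSmall_X T a')).mono (by omega))).add ((hW.mul hW').mono (by omega))

lemma exists_half {V : Type*} [NormedAddCommGroup V] [NormedSpace ℂ V] (T : Module.End ℂ V)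
    (s : Multiset ℂ) (hs : ∀ z ∈ s, ‖z‖ ≠ 1)
    (h0 : Polynomial.aeval T (s.map fun z => Polynomial.X - Polynomial.C z).prod = 0) :
    ∃ a d : ℕ, ∀ (v : V) (M : ℝ), (∀ i ≤ d, ‖(T ^ i) v‖ ≤ M) → ‖(T ^ a) v‖ ≤ M / 2 := by
  obtain ⟨a, d, R, hR, e, he0, he, hW⟩ := exists_prod T s hs (1 / 2) (by norm_num)
  refine ⟨a, d, fun v M hv => ?_⟩
  have hM : 0 ≤ M := (norm_nonneg _).trans (hv 0 (Nat.zero_le _))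
  have h1 : Polynomial.aeval T (Polynomial.X ^ a + R) = 0 := by
    obtain ⟨Q, hQ⟩ := hR
    rw [hQ, map_mul, h0, zero_mul]
  have h2 : (T ^ a) v = - (Polynomial.aeval T R) v := by
    have := congrArg (fun F : Module.End ℂ V => F v) h1
    simp at this
    exact eq_neg_of_add_eq_zero_left this
  rw [h2, norm_neg]
  refine (hW v M hv).trans ?_
  nlinarith

lemma iterate_half {V : Type*} [NormedAddCommGroup V] [NormedSpace ℂ V] (T : Module.End ℂ V)
    (a d : ℕ)
    (h : ∀ (v : V) (M : ℝ), (∀ i ≤ d, ‖(T ^ i) v‖ ≤ M) → ‖(T ^ a) v‖ ≤ M / 2) (t : ℕ) :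
    ∀ (v : V) (M : ℝ), (∀ i ≤ d * t, ‖(T ^ i) v‖ ≤ M) → ‖(T ^ (a * t)) v‖ ≤ M / 2 ^ t := by
  induction t with
  | zero => intro v M hv; simpa using hv 0 (Nat.zero_le _)
  | succ t ih =>
    intro v M hv
    have := ih ((T ^ a) v) (M / 2) (by
      intro i hi
      rw [← Module.End.mul_apply, ← pow_add, add_comm, pow_add, Module.End.mul_apply]
      apply h
      intro j hj
      rw [← Module.End.mul_apply, ← pow_add]
      exact hv _ (by rw [Nat.mul_succ]; omega))
    rw [← Module.End.mul_apply, ← pow_add] at this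
    rw [Nat.mul_succ, pow_succ']
    rwa [div_div] at this

/-- The hyperbolic estimate for integer matrices. -/
lemma int_contr (k : ℕ) (A : Matrix (Fin k) (Fin k) ℤ)
    (hEig : ∀ lam : ℂ, (A.map (Int.cast : ℤ → ℂ)).charpoly.IsRoot lam →
      lam ≠ 0 ∧ ‖lam‖ ≠ 1) :
    ∃ a d : ℕ, ∀ (t : ℕ) (w : Fin k → ℤ) (M : ℝ), 0 ≤ M →
      (∀ n ≤ d * t, ∀ i, |(((Aᵀ ^ n).mulVec w i : ℤ) : ℝ)| ≤ M) →
      ∀ i, |(((Aᵀ ^ (a * t)).mulVec w i : ℤ) : ℝ)| ≤ M / 2 ^ t := by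
  set C : Matrix (Fin k) (Fin k) ℂ := Aᵀ.map (Int.cast : ℤ → ℂ) with hC
  set T : Module.End ℂ (Fin k → ℂ) := Matrix.toLin' C with hT
  have hchar : C.charpoly = (A.map (Int.cast : ℤ → ℂ)).charpoly := by
    rw [hC, Matrix.transpose_map, Matrix.charpoly_transpose]
  have hprod : (C.charpoly.roots.map fun z => Polynomial.X - Polynomial.C z).prod
      = C.charpoly :=
    ((IsAlgClosed.splits C.charpoly).eq_prod_roots_of_monic C.charpoly_monic).symm
  obtain ⟨a, d, h⟩ := exists_half T C.charpoly.roots (by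
      intro z hz
      have := Polynomial.isRoot_of_mem_roots hz
      rw [hchar] at this
      exact (hEig z this).2) (by
      rw [hprod]
      have h1 := Matrix.aeval_self_charpoly C
      have h2 := congrArg (Matrix.toLinAlgEquiv' (R := ℂ)) h1
      rw [← Polynomial.aeval_algHom_apply, map_zero] at h2
      exact h2)
  refine ⟨a, d, fun t w M hM hw => ?_⟩
  have hpow : ∀ n i, ((T ^ n) (fun l => (w l : ℂ))) i = (((Aᵀ ^ n).mulVec w i : ℤ) : ℂ) := by
    intro n i
    rw [hT, ← Matrix.toLin'_pow, Matrix.toLin'_apply, hC]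
    have : (Aᵀ.map (Int.cast : ℤ → ℂ)) ^ n = (Aᵀ ^ n).map (Int.cast : ℤ → ℂ) :=
      (Matrix.map_pow Aᵀ (Int.castRingHom ℂ) n).symm
    rw [this]
    simp [Matrix.mulVec, dotProduct]
  have hn : ∀ n i, ‖((T ^ n) (fun l => (w l : ℂ))) i‖ = |(((Aᵀ ^ n).mulVec w i : ℤ) : ℝ)| := by
    intro n i
    rw [hpow, Complex.norm_intCast]
  have := iterate_half T a d h t (fun l => (w l : ℂ)) M (by
    intro n hnd
    rw [pi_norm_le_iff_of_nonneg hM]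
    intro i
    rw [hn]
    exact hw n hnd i)
  intro i
  rw [← hn]
  exact (norm_le_pi_norm _ i).trans this

/-- **Lemma 3.3**: if all complex eigenvalues `λ` of the integer matrix `A` are nonzero
with `|λ| ≠ 1`, then there are `δ ∈ (0, 1/2)`, `c̄ > 0` and `N ∈ ℕ` such that for every
`p > N` with `gcd(det A, p) = 1` and every `α ∈ (ℤ/pℤ)^k ∖ {0}` there is a positive
integer `j̄ ≤ c̄ ln p` such that the vector of fractional parts of `ᵗA^{j̄} α / p` has a
component in `[δ, 1−δ]`. -/
theorem lemma_3_3 (k : ℕ) (hk : 1 ≤ k)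
    (A : Matrix (Fin k) (Fin k) ℤ) (hA : A.det ≠ 0)
    (hEig : ∀ lam : ℂ, (A.map (Int.cast : ℤ → ℂ)).charpoly.IsRoot lam →
      lam ≠ 0 ∧ ‖lam‖ ≠ 1) :
    ∃ (δ cbar : ℝ) (N : ℕ), 0 < δ ∧ δ < 1 / 2 ∧ 0 < cbar ∧
      ∀ p : ℕ, N < p → Int.gcd A.det p = 1 →
        ∀ α : Fin k → ZMod p, α ≠ 0 →
          ∃ jb : ℕ, 1 ≤ jb ∧ (jb : ℝ) ≤ cbar * Real.log p ∧
            ∃ i : Fin k,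
              Int.fract ((((Aᵀ ^ jb).mulVec (fun l => ((α l).val : ℤ)) i : ℤ) : ℝ) / p)
                ∈ Set.Icc δ (1 - δ) := by
  obtain ⟨a, d, hcontr⟩ := int_contr k A hEig
  set K : ℝ := ∑ i, ∑ j, |((Aᵀ i j : ℤ) : ℝ)| with hK
  have hK0 : 0 ≤ K := by positivity
  set δ : ℝ := 1 / (K + 3) with hδ
  have hδ0 : 0 < δ := by positivity
  have hδK : (K + 3) * δ = 1 := by rw [hδ]; field_simp
  refine ⟨δ, 1 + 3 * d, 2, hδ0, by nlinarith, by positivity, ?_⟩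
  intro p hp hgcd α hα
  by_contra! hcon
  have hp0 : (0 : ℝ) < p := by exact_mod_cast (by omega : 0 < p)
  set x : Fin k → ℤ := fun l => ((α l).val : ℤ) with hx
  set t : ℕ := Nat.log 2 p + 1 with ht
  have hpt : (p : ℝ) < 2 ^ t := by
    exact_mod_cast Nat.lt_pow_succ_log_self (by norm_num) p
  -- length estimate
  have hlen : ((1 + d * t : ℕ) : ℝ) ≤ (1 + 3 * d) * Real.log p := by
    have h1 : (1 : ℝ) ≤ Real.log p := by
      rw [Real.le_log_iff_exp_le hp0]
      have : (3 : ℝ) ≤ p := by exact_mod_cast hp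
      linarith [Real.exp_one_lt_d9]
    have h2 : (Nat.log 2 p : ℝ) ≤ 2 * Real.log p := by
      have h3 : ((2 : ℝ) ^ Nat.log 2 p) ≤ p := by
        exact_mod_cast Nat.pow_log_le_self 2 (by omega)
      have h4 := Real.log_le_log (by positivity) h3
      rw [Real.log_pow] at h4
      have := Real.log_two_gt_d9
      have h5 : (0 : ℝ) ≤ (Nat.log 2 p : ℝ) := by positivity
      nlinarith
    have hd : (0 : ℝ) ≤ d := by positivity
    have h6 : (t : ℝ) ≤ 3 * Real.log p := by rw [ht]; push_cast; linarith
    push_cast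
    nlinarith [mul_le_mul_of_nonneg_left h6 hd]
  -- centered residues
  let z : ℕ → Fin k → ℤ := fun n => (Aᵀ ^ n).mulVec x
  have hsmall : ∀ n, 1 ≤ n → n ≤ 1 + d * t → ∀ i, ∃ r : ℤ,
      |((z n i - p * r : ℤ) : ℝ)| < δ * p := by
    intro n h1 h2 i
    have h3 := hcon n h1 (le_trans (by exact_mod_cast h2) hlen) i
    change Int.fract ((z n i : ℝ) / p) ∉ _ at h3
    set y : ℝ := (z n i : ℝ) / p with hy
    have hzy : (z n i : ℝ) = y * p := by rw [hy]; field_simp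
    rw [Set.mem_Icc, not_and_or, not_le, not_le] at h3
    have hfr := Int.self_sub_floor y
    have hf0 := Int.fract_nonneg y
    have hf1 := Int.fract_lt_one y
    rcases h3 with h3 | h3
    · refine ⟨⌊y⌋, ?_⟩
      push_cast
      rw [hzy, abs_lt]
      constructor <;> nlinarith
    · refine ⟨⌊y⌋ + 1, ?_⟩
      push_cast
      rw [hzy, abs_lt]
      constructor <;> nlinarith
  choose! r hr using hsmall
  let w : ℕ → Fin k → ℤ := fun n i => z n i - p * r n i
  have hw : ∀ n, 1 ≤ n → n ≤ 1 + d * t → ∀ i, |(w n i : ℝ)| < δ * p := hr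
  have hstep : ∀ n, 1 ≤ n → n + 1 ≤ 1 + d * t → w (n + 1) = Aᵀ.mulVec (w n) := by
    intro n h1 h2
    ext i
    have hz : z (n + 1) i = ∑ j, Aᵀ i j * z n j := by
      change ((Aᵀ ^ (n + 1)).mulVec x) i = (Aᵀ.mulVec ((Aᵀ ^ n).mulVec x)) i
      rw [pow_succ', Matrix.mulVec_mulVec]
    have hdiv : (p : ℤ) ∣ w (n + 1) i - Aᵀ.mulVec (w n) i := by
      refine ⟨∑ j, Aᵀ i j * r n j - r (n + 1) i, ?_⟩
      change (z (n + 1) i - p * r (n + 1) i) - ∑ j, Aᵀ i j * (z n j - p * r n j) = _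
      rw [hz]
      simp only [mul_sub, Finset.sum_sub_distrib, Finset.mul_sum]
      have : ∀ j, Aᵀ i j * ((p : ℤ) * r n j) = p * (Aᵀ i j * r n j) := fun j => by ring
      simp only [this]
      ring
    have hb : |((Aᵀ.mulVec (w n) i : ℤ) : ℝ)| ≤ K * (δ * p) := by
      change |((∑ j, Aᵀ i j * w n j : ℤ) : ℝ)| ≤ _
      push_cast
      calc |∑ j, (Aᵀ i j : ℝ) * (w n j : ℝ)|
          ≤ ∑ j, |(Aᵀ i j : ℝ) * (w n j : ℝ)| := Finset.abs_sum_le_sum_abs _ _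
        _ ≤ ∑ j, |(Aᵀ i j : ℝ)| * (δ * p) := by
            refine Finset.sum_le_sum fun j _ => ?_
            rw [abs_mul]
            exact mul_le_mul_of_nonneg_left (hw n h1 (by omega) j).le (abs_nonneg _)
        _ = (∑ j, |(Aᵀ i j : ℝ)|) * (δ * p) := by rw [Finset.sum_mul]
        _ ≤ K * (δ * p) := by
            refine mul_le_mul_of_nonneg_right ?_ (by positivity)
            rw [hK]
            exact Finset.single_le_sum (f := fun i => ∑ j, |((Aᵀ i j : ℤ) : ℝ)|)
              (fun i _ => by positivity) (Finset.mem_univ i)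
    have hlt : |w (n + 1) i - Aᵀ.mulVec (w n) i| < (p : ℤ) := by
      have h3 : |((w (n + 1) i : ℤ) : ℝ) - ((Aᵀ.mulVec (w n) i : ℤ) : ℝ)| < (p : ℝ) := by
        refine (abs_sub _ _).trans_lt ?_
        have := hw (n + 1) (by omega) h2 i
        have h5 : (K + 3) * δ * p = p := by rw [hδK, one_mul]
        have : 0 < δ * p := by positivity
        nlinarith
      exact_mod_cast h3
    have := Int.eq_zero_of_abs_lt_dvd hdiv hlt
    linarith
  have horb : ∀ n, n ≤ d * t → w (1 + n) = (Aᵀ ^ n).mulVec (w 1) := by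
    intro n
    induction n with
    | zero => intro _; simp
    | succ n ih =>
      intro hn
      rw [← add_assoc, hstep (1 + n) (by omega) (by omega), ih (by omega), pow_succ',
        Matrix.mulVec_mulVec]
  -- the first centered residue does not vanish
  have hw1 : w 1 ≠ 0 := by
    intro h0
    apply hα
    have h1 : ((Aᵀ.map (Int.castRingHom (ZMod p))).mulVec α) = 0 := by
      ext i
      have h2 := congrFun h0 i
      change z 1 i - p * r 1 i = 0 at h2
      have h3 : ((z 1 i : ℤ) : ZMod p) = 0 := by
        have h4 : z 1 i = p * r 1 i := by linarith
        rw [h4]; simp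
      have : NeZero p := ⟨by omega⟩
      have h5 : z 1 i = ∑ j, Aᵀ i j * ((α j).val : ℤ) := by
        change ((Aᵀ ^ 1).mulVec x) i = _
        rw [pow_one]; rfl
      rw [h5] at h3
      push_cast at h3
      simpa [Matrix.mulVec, dotProduct] using h3
    have hdet : IsUnit (Aᵀ.map (Int.castRingHom (ZMod p))).det := by
      have h2 : (Aᵀ.map (Int.castRingHom (ZMod p))).det = ((A.det : ℤ) : ZMod p) := by
        have := (Int.castRingHom (ZMod p)).map_det Aᵀ
        rw [Matrix.det_transpose] at this
        exact this.symm
      rw [h2, ZMod.coe_int_isUnit_iff_isCoprime, isCoprime_comm, Int.isCoprime_iff_gcd_eq_one]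
      exact hgcd
    have hinj := Matrix.mulVec_injective_of_isUnit
      ((Matrix.isUnit_iff_isUnit_det _).mpr hdet)
    exact hinj (by rw [h1, Matrix.mulVec_zero])
  have hfin := hcontr t (w 1) p hp0.le (by
    intro n hn i
    rw [← horb n hn]
    have := (hw (1 + n) (by omega) (by omega) i).le
    have hδ1 : δ * p ≤ 1 * p := mul_le_mul_of_nonneg_right (by nlinarith) hp0.le
    linarith)
  apply hw1
  have hzero : (Aᵀ ^ (a * t)).mulVec (w 1) = 0 := by
    ext i
    have h1 := hfin i
    have h2 : (p : ℝ) / 2 ^ t < 1 := by rw [div_lt_one (by positivity)]; exact hpt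
    have h3 := h1.trans_lt h2
    have h4 : |(Aᵀ ^ (a * t)).mulVec (w 1) i| < 1 := by exact_mod_cast h3
    exact Int.abs_lt_one_iff.mp h4
  exact Matrix.eq_zero_of_mulVec_eq_zero
    (by rw [Matrix.det_pow, Matrix.det_transpose]; exact pow_ne_zero _ hA) hzero
end
end

section
/- Let M be a k×k integer matrix, let d ≥ 2 and σ_1, …, σ_d be positive integers with σ = max_i σ_i, let p be a positive integer, and let y, α ∈ ℤ^k. For r, s ∈ ℕ define ξ_{r,s} = ⟨y, M^r · ∏_{i=1}^{s}(M − σ_i I) · α⟩ / p, and set L = [1/(2^d σ^{d+1}), 1 − 1/(2^d σ^{d+1})]. Suppose that for some j ≥ 1 and some e with 1 ≤ e ≤ d−1, the fractional parts of ξ_{j,0}, ξ_{j+1,0}, …, ξ_{j+e−1,0} all lie outside L. Then for every s ∈ {0, 1, …, e−1} and every r ∈ {j, j+1, …, j+e−s−1}, ξ_{r,s} lies in [−1/(2^{d−s} σ^{d−s+1}), 1/(2^{d−s} σ^{d−s+1})] modulo ℤ; in particular, ξ_{j+e−s−1, s} lies in [−1/(2^{d−s} σ³), 1/(2^{d−s}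 σ³)] modulo ℤ. -/
open scoped BigOperators
open Matrix

noncomputable section

/-- `∏_{i=1}^{s} (M − σ_i I)` (here `σ_i = σ (i-1)`). -/
def prodM {k : ℕ} (M : Matrix (Fin k) (Fin k) ℤ) (σ : ℕ → ℕ) (s : ℕ) :
    Matrix (Fin k) (Fin k) ℤ :=
  ((List.range s).map (fun i => M - (σ i : ℤ) • (1 : Matrix (Fin k) (Fin k) ℤ))).prod

/-- `ξ_{r,s} = ⟨y, M^r ∏_{i=1}^{s}(M − σ_i I) α⟩ / p`. -/
def xiRS {k : ℕ} (M : Matrix (Fin k) (Fin k) ℤ) (σ : ℕ → ℕ) (p : ℕ)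
    (y α : Fin k → ℤ) (r s : ℕ) : ℝ :=
  ((∑ l, y l * ((M ^ r * prodM M σ s).mulVec α) l : ℤ) : ℝ) / p

lemma prodM_succ_aux {k : ℕ} (M : Matrix (Fin k) (Fin k) ℤ) (σ : ℕ → ℕ) (s : ℕ) :
    prodM M σ (s+1) = prodM M σ s * (M - (σ s : ℤ) • (1 : Matrix (Fin k) (Fin k) ℤ)) := by
  simp [prodM, List.range_succ]

lemma prodM_comm_aux {k : ℕ} (M : Matrix (Fin k) (Fin k) ℤ) (σ : ℕ → ℕ) (s : ℕ) :
    prodM M σ s * M = M * prodM M σ s := by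
  induction s with
  | zero => simp [prodM]
  | succ n ih =>
    rw [prodM_succ_aux]
    simp only [mul_sub, sub_mul, mul_smul_comm, smul_mul_assoc, mul_one, ih, mul_assoc]

lemma xiRS_succ_aux {k : ℕ} (M : Matrix (Fin k) (Fin k) ℤ) (σ : ℕ → ℕ) (p : ℕ)
    (y α : Fin k → ℤ) (r s : ℕ) :
    xiRS M σ p y α r (s+1) = xiRS M σ p y α (r+1) s - (σ s : ℝ) * xiRS M σ p y α r s := by
  have h : M ^ r * prodM M σ (s+1)
      = M ^ (r+1) * prodM M σ s - (σ s : ℤ) • (M ^ r * prodM M σ s) := by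
    rw [prodM_succ_aux, mul_sub, prodM_comm_aux, mul_sub, pow_succ, mul_assoc, mul_smul_comm,
      mul_smul_comm, mul_one]
  have h2 : (∑ l, y l * ((M ^ r * prodM M σ (s+1)).mulVec α) l : ℤ)
      = (∑ l, y l * ((M ^ (r+1) * prodM M σ s).mulVec α) l : ℤ)
        - (σ s : ℤ) * (∑ l, y l * ((M ^ r * prodM M σ s).mulVec α) l : ℤ) := by
    rw [h, Finset.mul_sum, ← Finset.sum_sub_distrib]
    refine Finset.sum_congr rfl fun l _ => ?_
    rw [Matrix.sub_mulVec, Matrix.smul_mulVec]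
    simp only [Pi.sub_apply, Pi.smul_apply, smul_eq_mul]
    ring
  unfold xiRS
  rw [h2, Int.cast_sub, Int.cast_mul, Int.cast_natCast]
  ring

/-- **Lemma 3.5**: let `S = max_i σ_i` and
`L = [1/(2^d S^{d+1}), 1 − 1/(2^d S^{d+1})]`.  If the fractional parts of
`ξ_{j,0}, …, ξ_{j+e−1,0}` all lie outside `L` (with `j ≥ 1`, `1 ≤ e ≤ d−1`), then for all
`s ∈ {0,…,e−1}` and `r ∈ {j,…,j+e−s−1}`, `ξ_{r,s}` lies in
`[−1/(2^{d−s} S^{d−s+1}), 1/(2^{d−s} S^{d−s+1})]` modulo `ℤ`; in particular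
`ξ_{j+e−s−1,s}` lies in `[−1/(2^{d−s} S³), 1/(2^{d−s} S³)]` modulo `ℤ`. -/
theorem lemma_3_5 (k d : ℕ) (hd : 2 ≤ d)
    (M : Matrix (Fin k) (Fin k) ℤ)
    (σ : ℕ → ℕ) (hσ : ∀ i < d, 0 < σ i)
    (S : ℕ) (hS : S = (Finset.range d).sup σ)
    (p : ℕ) (hp : 0 < p) (y α : Fin k → ℤ)
    (j e : ℕ) (hj : 1 ≤ j) (he1 : 1 ≤ e) (he2 : e ≤ d - 1)
    (hout : ∀ m < e, Int.fract (xiRS M σ p y α (j + m) 0) ∉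
      Set.Icc (1 / ((2 : ℝ) ^ d * (S : ℝ) ^ (d + 1)))
        (1 - 1 / ((2 : ℝ) ^ d * (S : ℝ) ^ (d + 1)))) :
    ∀ s < e,
      (∀ r : ℕ, j ≤ r → r + s + 1 ≤ j + e →
        ∃ mz : ℤ, xiRS M σ p y α r s - mz ∈
          Set.Icc (-(1 / ((2 : ℝ) ^ (d - s) * (S : ℝ) ^ (d - s + 1))))
            (1 / ((2 : ℝ) ^ (d - s) * (S : ℝ) ^ (d - s + 1)))) ∧
      ∃ mz : ℤ, xiRS M σ p y α (j + e - s - 1) s - mz ∈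
        Set.Icc (-(1 / ((2 : ℝ) ^ (d - s) * (S : ℝ) ^ 3)))
          (1 / ((2 : ℝ) ^ (d - s) * (S : ℝ) ^ 3)) := by
  have hSle : ∀ i < d, σ i ≤ S := fun i hi => by
    rw [hS]; exact Finset.le_sup (f := σ) (Finset.mem_range.2 hi)
  have hS1 : 1 ≤ S := (hσ 0 (by omega)).trans_le (hSle 0 (by omega))
  have hS1r : (1:ℝ) ≤ S := by exact_mod_cast hS1
  have hS0 : (0:ℝ) < S := by linarith
  have main : ∀ s < e, ∀ r : ℕ, j ≤ r → r + s + 1 ≤ j + e →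
        ∃ mz : ℤ, xiRS M σ p y α r s - mz ∈
          Set.Icc (-(1 / ((2 : ℝ) ^ (d - s) * (S : ℝ) ^ (d - s + 1))))
            (1 / ((2 : ℝ) ^ (d - s) * (S : ℝ) ^ (d - s + 1))) := by
    intro s
    induction s with
    | zero =>
      intro _ r hr1 hr2
      have h := hout (r - j) (by omega)
      rw [show j + (r - j) = r by omega] at h
      simp only [Nat.sub_zero]
      have hB : 0 < 1 / ((2 : ℝ) ^ d * (S : ℝ) ^ (d + 1)) := by positivity
      generalize 1 / ((2 : ℝ) ^ d * (S : ℝ) ^ (d + 1)) = B at h hB ⊢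
      generalize xiRS M σ p y α r 0 = x at h ⊢
      have h0 := Int.fract_nonneg x
      have h1 := Int.fract_lt_one x
      have h2 := Int.self_sub_floor x
      by_cases hc : Int.fract x < B
      · exact ⟨⌊x⌋, by constructor <;> linarith⟩
      · have : 1 - B < Int.fract x := by
          by_contra hcc
          exact h ⟨not_lt.1 hc, not_lt.1 hcc⟩
        refine ⟨⌊x⌋ + 1, ?_⟩
        push_cast
        constructor <;> linarith
    | succ s ih =>
      intro hs r hr1 hr2
      obtain ⟨a, ha1, ha2⟩ := ih (by omega) (r+1) (by omega) (by omega)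
      obtain ⟨b, hb1, hb2⟩ := ih (by omega) r (by omega) (by omega)
      have hσs : (σ s : ℝ) ≤ S := by exact_mod_cast hSle s (by omega)
      have hσ0 : (0:ℝ) ≤ σ s := by positivity
      obtain ⟨t, ht⟩ : ∃ t, d - s = t + 1 := ⟨d - s - 1, by omega⟩
      rw [show d - (s+1) = t by omega]
      rw [ht] at ha1 ha2 hb1 hb2
      have hB : 0 < 1 / ((2 : ℝ) ^ (t+1) * (S : ℝ) ^ (t + 1 + 1)) := by positivity
      have hE : 1 / ((2 : ℝ) ^ t * (S : ℝ) ^ (t + 1))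
          = 2 * S * (1 / ((2 : ℝ) ^ (t+1) * (S : ℝ) ^ (t + 1 + 1))) := by
        field_simp
        ring
      rw [hE, xiRS_succ_aux]
      generalize 1 / ((2 : ℝ) ^ (t+1) * (S : ℝ) ^ (t + 1 + 1)) = B at *
      refine ⟨a - σ s * b, ?_⟩
      push_cast
      have k1 := mul_le_mul_of_nonneg_left hb1 hσ0
      have k2 := mul_le_mul_of_nonneg_left hb2 hσ0
      have k3 := mul_le_mul_of_nonneg_right hσs hB.le
      have k4 := mul_le_mul_of_nonneg_right hS1r hB.le
      constructor <;> nlinarith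
  intro s hs
  refine ⟨main s hs, ?_⟩
  obtain ⟨a, h1, h2⟩ := main s hs (j + e - s - 1) (by omega) (by omega)
  have hle : 1 / ((2 : ℝ) ^ (d - s) * (S : ℝ) ^ (d - s + 1))
      ≤ 1 / ((2 : ℝ) ^ (d - s) * (S : ℝ) ^ 3) := by
    apply one_div_le_one_div_of_le (by positivity)
    apply mul_le_mul_of_nonneg_left _ (by positivity)
    exact pow_le_pow_right₀ hS1r (by omega)
  exact ⟨a, by linarith, by linarith⟩
end
end
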